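/- arXiv:2109.10555 — 4 statements merged into one kernel-verified Lean document; each statement's English description precedes it below -/
import Mathlib

section
/- From the multilinear class to linear classes: Let $\vec p=(p_1,\ldots,p_n)$ with $1\le p_i\le\infty$ and $1/p=\sum_{i=1}^n 1/p_i\ge 0$, and let $\vec w=(w_1,\ldots,w_n)$ be a tuple of a.e. positive finite functions on $\mathbb{R}^{d_1}\times\mathbb{R}^{d_2}$ with $w=\prod_{i=1}^n w_i$. Then $[w_i^{-p_i'}]_{A_{np_i'}}\le[\vec w]_{A_{\vec p}}^{p_i'}$ for each $i=1,\ldots,n$, and $[w^p]_{A_{np}}\le[\vec w]_{A_{\vec p}}^{p}$; in the case $p_i=1$ the first estimate is interpreted as $[w_i^{1/n}]_{A_1}\le[\vec w]_{A_{\vec p}}^{1/n}$, and in the case $p=\infty$ the second as $[w^{-1/n}]_{A_1}\le[\vec w]_{A_{\vec p}}^{1/n}$. -/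
open MeasureTheory ENNReal
open scoped Classical

noncomputable section

/-- A point of the bi-parameter space `ℝ^{d₁} × ℝ^{d₂}`. -/
abbrev Pt (d₁ d₂ : ℕ) := (Fin d₁ → ℝ) × (Fin d₂ → ℝ)

/-- The axis-parallel cube with corner `a` and side length `h`. -/
def cubeOf {d : ℕ} (a : Fin d → ℝ) (h : ℝ) : Set (Fin d → ℝ) :=
  Set.univ.pi fun i => Set.Ico (a i) (a i + h)

/-- An axis-parallel cube in `ℝ^d` (with positive side length). -/
def IsCube {d : ℕ} (I : Set (Fin d → ℝ)) : Prop :=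
  ∃ a h, 0 < h ∧ I = cubeOf a h

/-- A rectangle `R = I¹ × I²`: a product of axis-parallel cubes. -/
def IsRect {d₁ d₂ : ℕ} (R : Set (Pt d₁ d₂)) : Prop :=
  ∃ I₁ I₂, IsCube I₁ ∧ IsCube I₂ ∧ R = I₁ ×ˢ I₂

/-- A standard dyadic cube `2^{-k}([0,1)^d + m)`. -/
def IsDyadicCube {d : ℕ} (I : Set (Fin d → ℝ)) : Prop :=
  ∃ (k : ℤ) (m : Fin d → ℤ),
    I = Set.univ.pi fun i => Set.Ico ((2:ℝ) ^ (-k) * m i) ((2:ℝ) ^ (-k) * (m i + 1))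

/-- A standard dyadic rectangle. -/
def IsDyadicRect {d₁ d₂ : ℕ} (R : Set (Pt d₁ d₂)) : Prop :=
  ∃ I₁ I₂, IsDyadicCube I₁ ∧ IsDyadicCube I₂ ∧ R = I₁ ×ˢ I₂

variable {X : Type*} [MeasureSpace X]

/-- `ℝ≥0∞`-valued average `⟨f⟩_R` of a (nonnegative) function over `R`. -/
def avgE (R : Set X) (f : X → ℝ) : ℝ≥0∞ :=
  (∫⁻ x in R, ENNReal.ofReal (f x)) / volume R

/-- essential supremum of a (nonnegative) function on `R`. -/
def essSupE (R : Set X) (f : X → ℝ) : ℝ≥0∞ :=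
  essSup (fun x => ENNReal.ofReal (f x)) (volume.restrict R)

/-- real-valued average `⟨f⟩_R`. -/
def avgR (R : Set X) (f : X → ℝ) : ℝ :=
  (∫ x in R, f x) / (volume R).toReal

/-- Hölder conjugate exponent on `ℝ≥0∞`. -/
def dualExp (p : ℝ≥0∞) : ℝ≥0∞ :=
  if p = 1 then ∞ else if p = ∞ then 1 else ENNReal.ofReal (p.toReal / (p.toReal - 1))

/-- `⟨w^p⟩_R^{1/p}`, interpreted as `ess sup_R w` when `p = ∞`. -/
def mainFactor (R : Set X) (w : X → ℝ) (p : ℝ≥0∞) : ℝ≥0∞ :=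
  if p = ∞ then essSupE R w
  else (avgE R fun x => w x ^ p.toReal) ^ (1 / p.toReal)

/-- `⟨w^{-p'}⟩_R^{1/p'}`, interpreted as `ess sup_R w⁻¹` when `p = 1`. -/
def dualFactor (R : Set X) (w : X → ℝ) (p : ℝ≥0∞) : ℝ≥0∞ :=
  if p = 1 then essSupE R fun x => (w x)⁻¹
  else (avgE R fun x => w x ^ (-(dualExp p).toReal)) ^ (1 / (dualExp p).toReal)

/-- `A_r` ratio on a set, `1 ≤ r < ∞`, with the `A_1` interpretation at `r = 1`. -/
def ArRatio (r : ℝ≥0∞) (R : Set X) (v : X → ℝ) : ℝ≥0∞ :=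
  if r = 1 then avgE R v * essSupE R (fun x => (v x)⁻¹)
  else avgE R v * (avgE R fun x => v x ^ (-(1 / (r.toReal - 1)))) ^ (r.toReal - 1)

/-- Bi-parameter `A_r` characteristic: supremum over all rectangles. -/
def ArRect {d₁ d₂ : ℕ} (r : ℝ≥0∞) (v : Pt d₁ d₂ → ℝ) : ℝ≥0∞ :=
  ⨆ (R : Set (Pt d₁ d₂)) (_ : IsRect R), ArRatio r R v

/-- One-parameter `A_r` characteristic: supremum over all cubes. -/
def ArCube {d : ℕ} (r : ℝ≥0∞) (v : (Fin d → ℝ) → ℝ) : ℝ≥0∞ :=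
  ⨆ (I : Set (Fin d → ℝ)) (_ : IsCube I), ArRatio r I v

/-- `A_∞` ratio `⟨v⟩_R exp(⟨log v⁻¹⟩_R)`. -/
def AinftyRatio (R : Set X) (v : X → ℝ) : ℝ≥0∞ :=
  avgE R v * ENNReal.ofReal (Real.exp (avgR R fun x => Real.log (v x)⁻¹))

/-- Bi-parameter `A_∞` characteristic. -/
def AinftyRect {d₁ d₂ : ℕ} (v : Pt d₁ d₂ → ℝ) : ℝ≥0∞ :=
  ⨆ (R : Set (Pt d₁ d₂)) (_ : IsRect R), AinftyRatio R v

/-- Multilinear `A_{\vec p}` ratio `⟨w^p⟩_R^{1/p} ∏_i ⟨w_i^{-p_i'}⟩_R^{1/p_i'}`. -/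
def AvecRatio {n : ℕ} (p : Fin n → ℝ≥0∞) (w : Fin n → X → ℝ) (R : Set X) : ℝ≥0∞ :=
  mainFactor R (fun x => ∏ i, w i x) (∑ i, (p i)⁻¹)⁻¹ * ∏ i, dualFactor R (w i) (p i)

/-- Multilinear bi-parameter `A_{\vec p}` characteristic. -/
def AvecRect {d₁ d₂ n : ℕ} (p : Fin n → ℝ≥0∞) (w : Fin n → Pt d₁ d₂ → ℝ) : ℝ≥0∞ :=
  ⨆ (R : Set (Pt d₁ d₂)) (_ : IsRect R), AvecRatio p w R

/-- `A^*_{\vec p}` ratio: `⟨w⟩_R ⟨w_{n+1}^{-p}⟩_R^{1/p} ∏_{i=1}^n ⟨w_i^{-p_i'}⟩_R^{1/p_i'}`. -/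
def AstarRatio {n : ℕ} (p : Fin n → ℝ≥0∞) (w : Fin n → X → ℝ) (wl : X → ℝ) (R : Set X) :
    ℝ≥0∞ :=
  avgE R (fun x => (∏ i, w i x) * wl x) *
    (avgE R fun x => wl x ^ (-((∑ i, (p i)⁻¹)⁻¹).toReal)) ^ (∑ i, (p i)⁻¹).toReal *
    ∏ i, dualFactor R (w i) (p i)

/-- `A^*_{\vec p}` characteristic. -/
def AstarRect {d₁ d₂ n : ℕ} (p : Fin n → ℝ≥0∞) (w : Fin n → Pt d₁ d₂ → ℝ)
    (wl : Pt d₁ d₂ → ℝ) : ℝ≥0∞ :=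
  ⨆ (R : Set (Pt d₁ d₂)) (_ : IsRect R), AstarRatio p w wl R

/-- `μ`-weighted `ℝ≥0∞`-valued average over `R`. -/
def wAvg (R : Set X) (μ f : X → ℝ) : ℝ≥0∞ :=
  (∫⁻ x in R, ENNReal.ofReal (f x) * ENNReal.ofReal (μ x)) /
    (∫⁻ x in R, ENNReal.ofReal (μ x))

/-- `A_{q_n,q}(μ)` ratio, with ess sup interpretations when `q = ∞` or `q_n = 1`. -/
def AqRatio (qn q : ℝ≥0∞) (μ V : X → ℝ) (R : Set X) : ℝ≥0∞ :=
  (if q = ∞ then essSupE R V else (wAvg R μ fun x => V x ^ q.toReal) ^ (1 / q.toReal)) *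
  (if qn = 1 then essSupE R (fun x => (V x)⁻¹)
   else (wAvg R μ fun x => V x ^ (-(dualExp qn).toReal)) ^ (1 / (dualExp qn).toReal))

/-- `A_{q_n,q}(μ)` characteristic: supremum over rectangles. -/
def AqRect {d₁ d₂ : ℕ} (qn q : ℝ≥0∞) (μ V : Pt d₁ d₂ → ℝ) : ℝ≥0∞ :=
  ⨆ (R : Set (Pt d₁ d₂)) (_ : IsRect R), AqRatio qn q μ V R

/-- `μ`-weighted `A_1` characteristic of `u`: `sup_R ⟨u⟩_R^μ · ess sup_R u⁻¹`. -/
def A1wRect {d₁ d₂ : ℕ} (μ u : Pt d₁ d₂ → ℝ) : ℝ≥0∞ :=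
  ⨆ (R : Set (Pt d₁ d₂)) (_ : IsRect R), wAvg R μ u * essSupE R (fun x => (u x)⁻¹)

/-- `L^p` norm of an `ℝ≥0∞`-valued function, `0 < p ≤ ∞`. -/
def eNorm (g : X → ℝ≥0∞) (p : ℝ≥0∞) : ℝ≥0∞ :=
  if p = ∞ then essSup g volume else (∫⁻ x, g x ^ p.toReal) ^ (1 / p.toReal)

/-- `L^s(λ)` norm of an `ℝ≥0∞`-valued function, `0 < s < ∞`. -/
def eNormW (g : X → ℝ≥0∞) (s : ℝ) (lam : X → ℝ) : ℝ≥0∞ :=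
  (∫⁻ x, g x ^ s * ENNReal.ofReal (lam x)) ^ (1 / s)

/-- weak `L^p` quasinorm with respect to the measure `μ`. -/
def weakNorm {α : Type*} [MeasurableSpace α] (g : α → ℝ) (p : ℝ) (μ : Measure α) : ℝ≥0∞ :=
  ⨆ (t : ℝ) (_ : 0 < t), ENNReal.ofReal t * (μ {x | t < |g x|}) ^ (1 / p)

end

/-- The normalized restriction of Lebesgue measure to `R`. -/
noncomputable def nuR {X : Type*} [MeasureSpace X] (R : Set X) : Measure X :=
  (volume R)⁻¹ • (volume : Measure X).restrict R

section aux
variable {X : Type*} [MeasureSpace X]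

theorem holder_prod {α ι : Type*} [MeasurableSpace α] (μ : Measure α) (s : Finset ι)
    (f : ι → α → ℝ) (hf : ∀ i, Measurable (f i)) (q : ι → ℝ≥0∞) :
    eLpNorm (fun x => ∏ i ∈ s, f i x) (∑ i ∈ s, (q i)⁻¹)⁻¹ μ ≤ ∏ i ∈ s, eLpNorm (f i) (q i) μ := by
  induction s using Finset.induction_on with
  | empty =>
    simp only [Finset.prod_empty, Finset.sum_empty, ENNReal.inv_zero, eLpNorm_exponent_top]
    refine (eLpNormEssSup_le_of_ae_bound (C := 1) (by simp)).trans (by simp)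
  | insert a s ha ih =>
    simp only [Finset.prod_insert ha, Finset.sum_insert ha]
    have : ENNReal.HolderTriple (q a) (∑ i ∈ s, (q i)⁻¹)⁻¹ ((q a)⁻¹ + ∑ i ∈ s, (q i)⁻¹)⁻¹ :=
      ⟨by simp⟩
    have := eLpNorm_smul_le_mul_eLpNorm (p := q a) (q := (∑ i ∈ s, (q i)⁻¹)⁻¹)
      (r := ((q a)⁻¹ + ∑ i ∈ s, (q i)⁻¹)⁻¹) (μ := μ) (φ := f a) (f := fun x => ∏ i ∈ s, f i x)
      (Finset.measurable_prod s (fun i _ => hf i)).aestronglyMeasurable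
      (hf a).aestronglyMeasurable
    exact this.trans (by gcongr)

theorem avgE_eq (R : Set X) (f : X → ℝ) :
    avgE R f = ∫⁻ x, ENNReal.ofReal (f x) ∂(nuR R) := by
  rw [avgE, nuR, lintegral_smul_measure, ENNReal.div_eq_inv_mul, smul_eq_mul]

theorem nuR_ae {R : Set X} {P : X → Prop} (h : ∀ᵐ x ∂(volume : Measure X), P x) :
    ∀ᵐ x ∂(nuR R), P x :=
  Measure.ae_smul_measure (ae_restrict_of_ae h) _

theorem essSupE_eq (R : Set X) (hR : volume R ≠ ∞) (f : X → ℝ)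
    (hf : ∀ᵐ x ∂(volume : Measure X), 0 < f x) :
    essSupE R f = eLpNorm f ∞ (nuR R) := by
  rw [essSupE, eLpNorm_exponent_top, eLpNormEssSup_eq_essSup_enorm, nuR,
    essSup_ennreal_smul_measure (by simpa using hR)]
  apply essSup_congr_ae
  filter_upwards [ae_restrict_of_ae hf] with x hx
  rw [← Real.enorm_of_nonneg hx.le]

theorem avg_rpow_eq (R : Set X) (f : X → ℝ) (p : ℝ≥0∞) (h0 : p ≠ 0) (ht : p ≠ ∞)
    (hf : ∀ᵐ x ∂(volume : Measure X), 0 < f x) :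
    (avgE R fun x => f x ^ p.toReal) ^ (1 / p.toReal) = eLpNorm f p (nuR R) := by
  rw [eLpNorm_eq_lintegral_rpow_enorm_toReal h0 ht, avgE_eq]
  congr 1
  apply lintegral_congr_ae
  filter_upwards [nuR_ae hf] with x hx
  rw [Real.enorm_of_nonneg hx.le, ENNReal.ofReal_rpow_of_pos hx]

theorem mainFactor_eq (R : Set X) (hR : volume R ≠ ∞) (f : X → ℝ) (p : ℝ≥0∞) (h0 : p ≠ 0)
    (hf : ∀ᵐ x ∂(volume : Measure X), 0 < f x) :
    mainFactor R f p = eLpNorm f p (nuR R) := by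
  unfold mainFactor
  split_ifs with h
  · rw [h, essSupE_eq R hR f hf]
  · exact avg_rpow_eq R f p h0 h hf

theorem dualExp_inv_add {p : ℝ≥0∞} (hp : 1 ≤ p) : p⁻¹ + (dualExp p)⁻¹ = 1 := by
  unfold dualExp
  split_ifs with h1 h2
  · simp [h1]
  · simp [h2]
  · lift p to NNReal using h2
    have hp' : (1 : ℝ) < p := by
      have : (1 : ℝ≥0∞) < p := lt_of_le_of_ne hp (Ne.symm h1)
      exact_mod_cast this
    have e : (p : ℝ≥0∞) = ENNReal.ofReal (p : ℝ) := by simp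
    rw [ENNReal.coe_toReal, e, ← ENNReal.ofReal_inv_of_pos (by linarith),
      ← ENNReal.ofReal_inv_of_pos (by apply div_pos <;> linarith),
      ← ENNReal.ofReal_add (by positivity) (inv_nonneg.2 (div_nonneg (by linarith) (by linarith)))]
    rw [← ENNReal.ofReal_one]
    congr 1
    have : (p : ℝ) ≠ 0 := by linarith
    field_simp
    ring

theorem dualExp_ne_zero {p : ℝ≥0∞} (hp : 1 ≤ p) : dualExp p ≠ 0 := by
  intro h
  have := dualExp_inv_add hp
  simp [h] at this

theorem dualExp_ne_top {p : ℝ≥0∞} (h1 : p ≠ 1) : dualExp p ≠ ∞ := by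
  unfold dualExp
  split_ifs <;> simp_all

theorem dualFactor_eq (R : Set X) (hR : volume R ≠ ∞) (f : X → ℝ) (p : ℝ≥0∞) (hp : 1 ≤ p)
    (hf : ∀ᵐ x ∂(volume : Measure X), 0 < f x) :
    dualFactor R f p = eLpNorm (fun x => (f x)⁻¹) (dualExp p) (nuR R) := by
  have hf' : ∀ᵐ x ∂(volume : Measure X), 0 < (f x)⁻¹ := hf.mono fun x hx => inv_pos.2 hx
  unfold dualFactor
  split_ifs with h
  · rw [essSupE_eq R hR _ hf', dualExp, if_pos h]
  · rw [← avg_rpow_eq R _ _ (dualExp_ne_zero hp) (dualExp_ne_top h) hf', avgE_eq, avgE_eq]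
    congr 1
    apply lintegral_congr_ae
    filter_upwards [nuR_ae hf] with x hx
    rw [Real.rpow_neg hx.le, Real.inv_rpow hx.le]

theorem ArRatio_eq (R : Set X) (hR : volume R ≠ ∞) (v : X → ℝ) (r : ℝ≥0∞) (h1 : 1 ≤ r)
    (ht : r ≠ ∞) (hv : ∀ᵐ x ∂(volume : Measure X), 0 < v x) :
    ArRatio r R v = eLpNorm v 1 (nuR R) * eLpNorm (fun x => (v x)⁻¹) (r - 1)⁻¹ (nuR R) := by
  have hv' : ∀ᵐ x ∂(volume : Measure X), 0 < (v x)⁻¹ := hv.mono fun x hx => inv_pos.2 hx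
  have e1 : avgE R v = eLpNorm v 1 (nuR R) := by
    rw [← avg_rpow_eq R v 1 one_ne_zero one_ne_top hv]
    simp
  unfold ArRatio
  split_ifs with h
  · rw [e1, essSupE_eq R hR _ hv', h]; simp
  · have hs : r - 1 ≠ 0 := by
      rw [Ne, tsub_eq_zero_iff_le]
      exact fun h' => h (le_antisymm h' h1)
    have hs' : r - 1 ≠ ∞ := ENNReal.sub_ne_top ht
    have e : ((r - 1)⁻¹).toReal = 1 / (r.toReal - 1) := by
      rw [ENNReal.toReal_inv, ENNReal.toReal_sub_of_le h1 ht]; simp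
    rw [e1, ← avg_rpow_eq R _ (r - 1)⁻¹ (by simpa using hs') (by simpa using hs) hv', e,
      avgE_eq, avgE_eq, one_div_one_div]
    congr 2
    apply lintegral_congr_ae
    filter_upwards [nuR_ae hv] with x hx
    rw [Real.rpow_neg hx.le, Real.inv_rpow hx.le]

theorem eLpNorm_rpow_pos {μ : Measure X} (f g : X → ℝ) (s : ℝ) (hs : 0 < s) (q : ℝ≥0∞)
    (hf : ∀ᵐ x ∂μ, 0 < f x ∧ g x = f x ^ s) :
    eLpNorm g q μ = eLpNorm f (q * ENNReal.ofReal s) μ ^ s := by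
  rw [← eLpNorm_norm_rpow f hs]
  apply eLpNorm_congr_ae
  filter_upwards [hf] with x hx
  rw [hx.2, Real.norm_of_nonneg hx.1.le]

theorem ArRatio_le (R : Set X) (hR : volume R ≠ ∞) (n : ℕ) (f v : X → ℝ) (q S B : ℝ≥0∞)
    (h0 : q ≠ 0) (ht : q ≠ ∞) (hS : S + q⁻¹ = n)
    (hf : ∀ᵐ x ∂(volume : Measure X), 0 < f x ∧ v x = f x ^ q.toReal)
    (hB : eLpNorm (fun x => (f x)⁻¹) S⁻¹ (nuR R) ≤ B) :
    ArRatio (n * q) R v ≤ (eLpNorm f q (nuR R) * B) ^ q.toReal := by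
  have hq : 0 < q.toReal := ENNReal.toReal_pos h0 ht
  have h1 : 1 ≤ (n : ℝ≥0∞) * q := by
    rw [← hS, add_mul, ENNReal.inv_mul_cancel h0 ht]
    exact le_add_self
  have hE : ((n : ℝ≥0∞) * q - 1)⁻¹ * q = S⁻¹ := by
    have : (n : ℝ≥0∞) * q - 1 = S * q := by
      rw [← hS, add_mul, ENNReal.inv_mul_cancel h0 ht]
      exact ENNReal.add_sub_cancel_right one_ne_top
    rw [this, ENNReal.mul_inv (Or.inr ht) (Or.inr h0), mul_assoc,
      ENNReal.inv_mul_cancel h0 ht, mul_one]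
  rw [ArRatio_eq R hR v _ h1 (ENNReal.mul_ne_top (by simp) ht)
      (hf.mono fun x hx => by rw [hx.2]; exact Real.rpow_pos_of_pos hx.1 _),
    eLpNorm_rpow_pos f v q.toReal hq 1 (nuR_ae hf),
    eLpNorm_rpow_pos (fun x => (f x)⁻¹) (fun x => (v x)⁻¹) q.toReal hq _
      (nuR_ae (hf.mono fun x hx => ⟨inv_pos.2 hx.1, by rw [hx.2, Real.inv_rpow hx.1.le]⟩)),
    ENNReal.ofReal_toReal ht, hE, one_mul, ENNReal.mul_rpow_of_nonneg _ _ hq.le]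
  gcongr

theorem ArRatio_one_le (R : Set X) (hR : volume R ≠ ∞) (n : ℕ) (hn : n ≠ 0) (f v : X → ℝ)
    (B : ℝ≥0∞) (hf : ∀ᵐ x ∂(volume : Measure X), 0 < f x ∧ v x = (f x)⁻¹ ^ ((n : ℝ)⁻¹))
    (hB : eLpNorm (fun x => (f x)⁻¹) (n : ℝ≥0∞)⁻¹ (nuR R) ≤ B) :
    ArRatio 1 R v ≤ (eLpNorm f ∞ (nuR R) * B) ^ ((n : ℝ)⁻¹) := by
  have hn' : (0 : ℝ) < n := by positivity
  have hq : (0 : ℝ) < (n : ℝ)⁻¹ := by positivity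
  rw [ArRatio_eq R hR v _ le_rfl one_ne_top
      (hf.mono fun x hx => by rw [hx.2]; exact Real.rpow_pos_of_pos (inv_pos.2 hx.1) _),
    eLpNorm_rpow_pos (fun x => (f x)⁻¹) v _ hq 1
      (nuR_ae (hf.mono fun x hx => ⟨inv_pos.2 hx.1, hx.2⟩)),
    eLpNorm_rpow_pos f (fun x => (v x)⁻¹) _ hq _
      (nuR_ae (hf.mono fun x hx => ⟨hx.1, by rw [hx.2, Real.inv_rpow hx.1.le, inv_inv]⟩)),
    ENNReal.ofReal_inv_of_pos hn', ENNReal.ofReal_natCast, one_mul, tsub_self, ENNReal.inv_zero,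
    ENNReal.top_mul (by simp), ENNReal.mul_rpow_of_nonneg _ _ hq.le, mul_comm]
  gcongr

theorem AvecRatio_eq (R : Set X) (hR : volume R ≠ ∞) {n : ℕ} (p : Fin n → ℝ≥0∞)
    (hp : ∀ i, 1 ≤ p i) (w : Fin n → X → ℝ)
    (hwpos : ∀ᵐ x ∂(volume : Measure X), ∀ i, 0 < w i x) :
    AvecRatio p w R = eLpNorm (fun x => ∏ i, w i x) (∑ i, (p i)⁻¹)⁻¹ (nuR R) *
      ∏ i, eLpNorm (fun x => (w i x)⁻¹) (dualExp (p i)) (nuR R) := by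
  unfold AvecRatio
  rw [mainFactor_eq R hR _ _ _ (hwpos.mono fun x hx => Finset.prod_pos fun i _ => hx i)]
  · congr 1
    exact Finset.prod_congr rfl fun i _ =>
      dualFactor_eq R hR _ _ (hp i) (hwpos.mono fun x hx => hx i)
  · rw [Ne, ENNReal.inv_eq_zero, ENNReal.sum_eq_top]
    rintro ⟨i, _, hi⟩
    have := hp i
    rw [ENNReal.inv_eq_top] at hi
    simp [hi] at this

theorem sum_exps {n : ℕ} (p : Fin n → ℝ≥0∞) (hp : ∀ i, 1 ≤ p i) :
    ∑ i, (p i)⁻¹ + ∑ i, (dualExp (p i))⁻¹ = n := by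
  rw [← Finset.sum_add_distrib, Finset.sum_congr rfl fun i _ => dualExp_inv_add (hp i)]
  simp

/-- Hölder bound for a single weight. -/
theorem holder_single {μ : Measure X} {n : ℕ} (p : Fin n → ℝ≥0∞) (w : Fin n → X → ℝ)
    (hw : ∀ i, Measurable (w i)) (hwpos : ∀ᵐ x ∂μ, ∀ i, 0 < w i x) (i : Fin n) :
    eLpNorm (w i) (∑ j, (p j)⁻¹ + ∑ j ∈ Finset.univ.erase i, (dualExp (p j))⁻¹)⁻¹ μ ≤
      eLpNorm (fun x => ∏ j, w j x) (∑ j, (p j)⁻¹)⁻¹ μ *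
        ∏ j ∈ Finset.univ.erase i, eLpNorm (fun x => (w j x)⁻¹) (dualExp (p j)) μ := by
  have hm : ∀ j, Measurable (fun x => (w j x)⁻¹) := fun j => (hw j).inv
  have h1 := holder_prod μ (Finset.univ.erase i) (fun j x => (w j x)⁻¹) hm (fun j => dualExp (p j))
  have : ENNReal.HolderTriple (∑ j, (p j)⁻¹)⁻¹
      (∑ j ∈ Finset.univ.erase i, (dualExp (p j))⁻¹)⁻¹
      (∑ j, (p j)⁻¹ + ∑ j ∈ Finset.univ.erase i, (dualExp (p j))⁻¹)⁻¹ := ⟨by simp⟩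
  have h2 := eLpNorm_smul_le_mul_eLpNorm (p := (∑ j, (p j)⁻¹)⁻¹)
    (q := (∑ j ∈ Finset.univ.erase i, (dualExp (p j))⁻¹)⁻¹)
    (r := (∑ j, (p j)⁻¹ + ∑ j ∈ Finset.univ.erase i, (dualExp (p j))⁻¹)⁻¹) (μ := μ)
    (φ := fun x => ∏ j, w j x) (f := fun x => ∏ j ∈ Finset.univ.erase i, (w j x)⁻¹)
    (Finset.measurable_prod _ (fun j _ => hm j)).aestronglyMeasurable
    (Finset.measurable_prod _ (fun j _ => hw j)).aestronglyMeasurable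
  refine le_trans (le_of_eq ?_) (h2.trans (by gcongr))
  apply eLpNorm_congr_ae
  filter_upwards [hwpos] with x hx
  simp only [Pi.smul_apply', smul_eq_mul]
  rw [← Finset.mul_prod_erase Finset.univ (fun j => w j x) (Finset.mem_univ i), mul_assoc,
    ← Finset.prod_mul_distrib, Finset.prod_eq_one, mul_one]
  exact fun j _ => mul_inv_cancel₀ (hx j).ne'

end aux

theorem rect_vol {d₁ d₂ : ℕ} {R : Set (Pt d₁ d₂)} (h : IsRect R) : volume R ≠ ∞ := by
  obtain ⟨_, _, ⟨a, s, hs, rfl⟩, ⟨b, t, ht, rfl⟩, rfl⟩ := h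
  rw [Measure.volume_eq_prod, Measure.prod_prod]
  apply ENNReal.mul_ne_top <;>
  · rw [cubeOf, Real.volume_pi_Ico]
    exact ENNReal.prod_ne_top fun i _ => ENNReal.ofReal_ne_top

theorem ArRect_le {d₁ d₂ n : ℕ} (r : ℝ≥0∞) (v : Pt d₁ d₂ → ℝ) (p : Fin n → ℝ≥0∞)
    (w : Fin n → Pt d₁ d₂ → ℝ) (s : ℝ) (hs : 0 ≤ s)
    (h : ∀ R, IsRect R → ArRatio r R v ≤ AvecRatio p w R ^ s) :
    ArRect r v ≤ AvecRect p w ^ s := by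
  refine iSup₂_le fun R hR => (h R hR).trans ?_
  gcongr
  exact le_iSup₂ (f := fun (R : Set (Pt d₁ d₂)) (_ : IsRect R) => AvecRatio p w R) R hR

/-- From the multilinear class to linear classes.
Let `1 ≤ p_i ≤ ∞`, `1/p = ∑ 1/p_i ≥ 0`, `w = ∏ w_i`.  Then
`[w_i^{-p_i'}]_{A_{n p_i'}} ≤ [w⃗]_{A_{p⃗}}^{p_i'}` (interpreted as
`[w_i^{1/n}]_{A_1} ≤ [w⃗]^{1/n}` when `p_i = 1`), and
`[w^p]_{A_{np}} ≤ [w⃗]^p` (interpreted as `[w^{-1/n}]_{A_1} ≤ [w⃗]^{1/n}` when `p = ∞`). -/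
theorem statement3 {d₁ d₂ n : ℕ}
    (p : Fin n → ℝ≥0∞) (hp : ∀ i, 1 ≤ p i)
    (w : Fin n → Pt d₁ d₂ → ℝ) (hw : ∀ i, Measurable (w i))
    (hwpos : ∀ i, ∀ᵐ x ∂(volume : Measure (Pt d₁ d₂)), 0 < w i x) :
    (∀ i, p i ≠ 1 →
      ArRect ((n : ℝ≥0∞) * dualExp (p i))
          (fun x => w i x ^ (-(dualExp (p i)).toReal))
        ≤ AvecRect p w ^ (dualExp (p i)).toReal) ∧
    (∀ i, p i = 1 →
      ArRect (d₁ := d₁) (d₂ := d₂) 1 (fun x => w i x ^ ((n : ℝ)⁻¹))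
        ≤ AvecRect p w ^ ((n : ℝ)⁻¹)) ∧
    ((∑ i, (p i)⁻¹)⁻¹ ≠ ∞ →
      ArRect ((n : ℝ≥0∞) * (∑ i, (p i)⁻¹)⁻¹)
          (fun x => (∏ i, w i x) ^ ((∑ i, (p i)⁻¹)⁻¹).toReal)
        ≤ AvecRect p w ^ ((∑ i, (p i)⁻¹)⁻¹).toReal) ∧
    ((∑ i, (p i)⁻¹)⁻¹ = ∞ →
      ArRect (d₁ := d₁) (d₂ := d₂) 1 (fun x => (∏ i, w i x) ^ (-(n : ℝ)⁻¹))
        ≤ AvecRect p w ^ ((n : ℝ)⁻¹)) := by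
  have hpos : ∀ᵐ x ∂(volume : Measure (Pt d₁ d₂)), ∀ i, 0 < w i x := ae_all_iff.2 hwpos
  have hsum := sum_exps p hp
  have hsplit : ∀ i, (∑ j, (p j)⁻¹ + ∑ j ∈ Finset.univ.erase i, (dualExp (p j))⁻¹)
      + (dualExp (p i))⁻¹ = n := fun i => by
    rw [← hsum, add_assoc, Finset.sum_erase_add _ _ (Finset.mem_univ i)]
  have hP0 : (∑ i, (p i)⁻¹)⁻¹ ≠ 0 := by
    rw [Ne, ENNReal.inv_eq_zero]
    intro h
    rw [h] at hsum
    simp at hsum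
  have hA : ∀ (R : Set (Pt d₁ d₂)) (i : Fin n), IsRect R → AvecRatio p w R =
      eLpNorm (fun x => (w i x)⁻¹) (dualExp (p i)) (nuR R) *
      (eLpNorm (fun x => ∏ j, w j x) (∑ j, (p j)⁻¹)⁻¹ (nuR R) *
        ∏ j ∈ Finset.univ.erase i, eLpNorm (fun x => (w j x)⁻¹) (dualExp (p j)) (nuR R)) := by
    intro R i hR
    rw [AvecRatio_eq R (rect_vol hR) p hp w hpos,
      ← Finset.mul_prod_erase Finset.univ _ (Finset.mem_univ i)]
    ring
  have hH : ∀ R : Set (Pt d₁ d₂),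
      eLpNorm (fun x => (∏ j, w j x)⁻¹) (∑ j, (dualExp (p j))⁻¹)⁻¹ (nuR R) ≤
        ∏ j, eLpNorm (fun x => (w j x)⁻¹) (dualExp (p j)) (nuR R) := fun R => by
    simp only [← Finset.prod_inv_distrib]
    exact holder_prod (nuR R) Finset.univ (fun j x => (w j x)⁻¹) (fun j => (hw j).inv) _
  refine ⟨fun i hi => ?_, fun i hi => ?_, fun hP => ?_, fun hP => ?_⟩
  · refine ArRect_le _ _ _ _ _ ENNReal.toReal_nonneg fun R hR => ?_
    rw [hA R i hR]
    refine ArRatio_le R (rect_vol hR) n _ _ _ _ _ (dualExp_ne_zero (hp i)) (dualExp_ne_top hi)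
      (hsplit i) (hpos.mono fun x hx => ⟨inv_pos.2 (hx i), ?_⟩) ?_
    · rw [Real.rpow_neg (hx i).le, Real.inv_rpow (hx i).le]
    · simp only [inv_inv]
      exact holder_single p w hw (nuR_ae hpos) i
  · refine ArRect_le _ _ _ _ _ (by positivity) fun R hR => ?_
    have ht : dualExp (p i) = ∞ := by simp [dualExp, hi]
    have hs := hsplit i
    rw [ht, ENNReal.inv_top, add_zero] at hs
    rw [hA R i hR, ht]
    refine ArRatio_one_le R (rect_vol hR) n (fun h => by subst h; exact i.elim0) _ _ _
      (hpos.mono fun x hx => ⟨inv_pos.2 (hx i), ?_⟩) ?_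
    · rw [inv_inv]
    · simp only [inv_inv]
      rw [← hs]
      exact holder_single p w hw (nuR_ae hpos) i
  · refine ArRect_le _ _ _ _ _ ENNReal.toReal_nonneg fun R hR => ?_
    rw [AvecRatio_eq R (rect_vol hR) p hp w hpos]
    refine ArRatio_le R (rect_vol hR) n _ _ _ (∑ j, (dualExp (p j))⁻¹) _ hP0 hP
      (by rw [inv_inv, add_comm, hsum])
      (hpos.mono fun x hx => ⟨Finset.prod_pos fun j _ => hx j, rfl⟩) (hH R)
  · refine ArRect_le _ _ _ _ _ (by positivity) fun R hR => ?_
    rcases Nat.eq_zero_or_pos n with rfl | hn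
    · rw [ArRatio_eq R (rect_vol hR) _ _ le_rfl one_ne_top (by simp)]
      have hnu : nuR R Set.univ ≤ 1 := by
        simp only [nuR, Measure.smul_apply, Measure.restrict_apply_univ, smul_eq_mul]
        exact ENNReal.inv_mul_le_one _
      simp only [Finset.univ_eq_empty, Finset.prod_empty, Nat.cast_zero, inv_zero, neg_zero,
        Real.rpow_zero, ENNReal.rpow_zero, inv_one, tsub_self, ENNReal.inv_zero]
      refine (mul_le_mul' (b := 1) (d := 1) ?_ ?_).trans (by simp)
      · simpa [eLpNorm_one_eq_lintegral_enorm] using hnu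
      · rw [eLpNorm_exponent_top]
        exact (eLpNormEssSup_le_of_ae_bound (C := 1) (by simp)).trans (by simp)
    · rw [AvecRatio_eq R (rect_vol hR) p hp w hpos]
      have h0 : ∑ i, (p i)⁻¹ = 0 := by simpa only [ENNReal.inv_eq_top] using hP
      rw [h0, zero_add] at hsum
      have := hH R
      rw [hsum] at this
      rw [h0, ENNReal.inv_zero]
      refine ArRatio_one_le R (rect_vol hR) n hn.ne' _ _ _
        (hpos.mono fun x hx => ⟨Finset.prod_pos fun j _ => hx j, ?_⟩) this
      have hxp : 0 < ∏ j, w j x := Finset.prod_pos fun j _ => hx j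
      rw [Real.rpow_neg hxp.le, Real.inv_rpow hxp.le]
end

section
/- Slice characterization of bi-parameter $A_p$: Let $1<p<\infty$ and let $w$ be a weight on $\mathbb{R}^{d_1}\times\mathbb{R}^{d_2}$. Then $[w]_{A_p(\mathbb{R}^{d_1}\times\mathbb{R}^{d_2})}<\infty$ if and only if $\max\big(\mathrm{ess\,sup}_{x_1\in\mathbb{R}^{d_1}}[w(x_1,\cdot)]_{A_p(\mathbb{R}^{d_2})},\ \mathrm{ess\,sup}_{x_2\in\mathbb{R}^{d_2}}[w(\cdot,x_2)]_{A_p(\mathbb{R}^{d_1})}\big)<\infty$; moreover this maximum is at most $[w]_{A_p(\mathbb{R}^{d_1}\times\mathbb{R}^{d_2})}$, while $[w]_{A_p(\mathbb{R}^{d_1}\times\mathbb{R}^{d_2})}$ is bounded by a constant (depending on $p$ and the dimensions) times a power of this maximum. -/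
open MeasureTheory ENNReal
open scoped Classical

namespace SliceAp

open Set Filter Topology

lemma vol_cube {d : ℕ} (a : Fin d → ℝ) {h : ℝ} (hh : 0 < h) :
    volume (cubeOf a h) = ENNReal.ofReal (h ^ d) := by
  unfold cubeOf
  rw [Real.volume_pi_Ico]
  simp [ENNReal.ofReal_pow hh.le]

lemma vol_cube_ne_zero {d : ℕ} {I : Set (Fin d → ℝ)} (hI : IsCube I) : volume I ≠ 0 := by
  obtain ⟨a, h, hh, rfl⟩ := hI
  rw [vol_cube a hh]
  simp only [ne_eq, ENNReal.ofReal_eq_zero, not_le]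
  positivity

lemma vol_cube_ne_top {d : ℕ} {I : Set (Fin d → ℝ)} (hI : IsCube I) : volume I ≠ ∞ := by
  obtain ⟨a, h, hh, rfl⟩ := hI
  rw [vol_cube a hh]
  exact ENNReal.ofReal_ne_top

lemma closedBall_ae {d : ℕ} (x : Fin d → ℝ) {r : ℝ} (hr : 0 < r) :
    (cubeOf (fun i => x i - r) (2 * r)) =ᵐ[volume] (Metric.closedBall x r) := by
  have h1 : Metric.closedBall x r = Icc (fun i => x i - r) (fun i => x i - r + 2 * r) := by
    rw [closedBall_pi x hr.le, ← pi_univ_Icc]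
    congr 1
    funext i
    rw [Real.closedBall_eq_Icc]
    congr 1
    ring
  rw [h1]
  exact Measure.univ_pi_Ico_ae_eq_Icc

/-- the ratio inequality without divisions -/
lemma ratio_le_iff {X : Type*} [MeasureSpace X] {p : ℝ} (hp : 1 < p) (R : Set X) (v : X → ℝ)
    (K : ℝ≥0∞) (h0 : volume R ≠ 0) (ht : volume R ≠ ∞) :
    ArRatio (ENNReal.ofReal p) R v ≤ K ↔
      (∫⁻ x in R, ENNReal.ofReal (v x)) *
        (∫⁻ x in R, ENNReal.ofReal (v x ^ (-(1 / (p - 1))))) ^ (p - 1) ≤ K * volume R ^ p := by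
  have hp1 : ENNReal.ofReal p ≠ 1 := by
    intro h
    rw [ENNReal.ofReal_eq_one] at h
    linarith
  unfold ArRatio avgE
  rw [if_neg hp1, ENNReal.toReal_ofReal (by linarith),
    ENNReal.div_rpow_of_nonneg _ _ (by linarith)]
  have hV : volume R ^ p = volume R * volume R ^ (p - 1) := by
    conv_lhs => rw [show p = 1 + (p - 1) by ring]
    rw [ENNReal.rpow_add _ _ h0 ht, ENNReal.rpow_one]
  have hq0 : volume R ^ (p - 1) ≠ 0 := by simp [ENNReal.rpow_eq_zero_iff, h0, ht]
  have hqt : volume R ^ (p - 1) ≠ ∞ := by simp [ENNReal.rpow_eq_top_iff, h0, ht]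
  rw [hV, ← ENNReal.div_le_iff (mul_ne_zero h0 hq0) (ENNReal.mul_ne_top ht hqt)]
  have hcomm : ∀ a b V U : ℝ≥0∞, V ≠ 0 → V ≠ ∞ → a / V * (b / U) = a * b / (V * U) := by
    intro a b V U hV0 hVt
    rw [div_eq_mul_inv, div_eq_mul_inv, div_eq_mul_inv,
      ENNReal.mul_inv (Or.inl hV0) (Or.inl hVt), mul_mul_mul_comm]
  rw [hcomm _ _ _ _ h0 ht]

/-- Hölder: a single averaging operator is bounded on `L^p(v)`. -/
lemma holder_avg {X : Type*} [MeasurableSpace X] {p : ℝ} (hp : 1 < p) (μ : Measure X)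
    {f W S : X → ℝ≥0∞} (hf : Measurable f) (hW : Measurable W)
    (hWt : ∀ᵐ x ∂μ, W x ≠ ∞) (hW0 : ∀ᵐ x ∂μ, W x ≠ 0)
    (hWS : ∀ᵐ x ∂μ, S x = W x ^ (-(1 / (p - 1)))) :
    (∫⁻ x, f x ∂μ) ^ p ≤ (∫⁻ x, f x ^ p * W x ∂μ) * (∫⁻ x, S x ∂μ) ^ (p - 1) := by
  have hp0 : 0 < p := by linarith
  have hq : p.HolderConjugate (Real.conjExponent p) := Real.HolderConjugate.conjExponent hp
  have h := ENNReal.lintegral_mul_le_Lp_mul_Lq μ hq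
    (f := fun x => f x * W x ^ (1 / p)) (g := fun x => W x ^ (-(1 / p)))
    (by fun_prop) (by fun_prop)
  have e1 : ∫⁻ x, ((fun x => f x * W x ^ (1 / p)) * (fun x => W x ^ (-(1 / p)))) x ∂μ
      = ∫⁻ x, f x ∂μ := by
    apply lintegral_congr_ae
    filter_upwards [hWt, hW0] with x h1 h2
    simp only [Pi.mul_apply]
    rw [mul_assoc, ← ENNReal.rpow_add _ _ h2 h1]
    simp
  have e2 : ∫⁻ x, (f x * W x ^ (1 / p)) ^ p ∂μ = ∫⁻ x, f x ^ p * W x ∂μ := by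
    apply lintegral_congr
    intro x
    rw [ENNReal.mul_rpow_of_nonneg _ _ hp0.le, ← ENNReal.rpow_mul, one_div,
      inv_mul_cancel₀ hp0.ne', ENNReal.rpow_one]
  have e3 : ∫⁻ x, (W x ^ (-(1 / p))) ^ (Real.conjExponent p) ∂μ = ∫⁻ x, S x ∂μ := by
    apply lintegral_congr_ae
    filter_upwards [hWS] with x h1
    rw [h1, ← ENNReal.rpow_mul]
    congr 1
    have : p - 1 ≠ 0 := by linarith
    unfold Real.conjExponent
    field_simp
  rw [e1, e2, e3] at h
  calc (∫⁻ x, f x ∂μ) ^ p ≤ _ := ENNReal.rpow_le_rpow h hp0.le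
    _ = _ := by
      rw [ENNReal.mul_rpow_of_nonneg _ _ hp0.le, ← ENNReal.rpow_mul, ← ENNReal.rpow_mul]
      have : p - 1 ≠ 0 := by linarith
      congr 2
      · rw [one_div, inv_mul_cancel₀ hp0.ne', ENNReal.rpow_one]
      · unfold Real.conjExponent
        field_simp

/-- Differentiation step. -/
lemma diff_step {d : ℕ} {p : ℝ} (hp : 1 < p) {A B : (Fin d → ℝ) → ℝ≥0∞}
    (hA : Measurable A) (hB : Measurable B) {K : ℝ≥0∞}
    (hAt : ∀ I : Set (Fin d → ℝ), IsCube I → ∫⁻ x in I, A x ≠ ∞)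
    (hBt : ∀ I : Set (Fin d → ℝ), IsCube I → ∫⁻ x in I, B x ≠ ∞)
    (hK : ∀ I : Set (Fin d → ℝ), IsCube I →
      (∫⁻ x in I, A x) * (∫⁻ x in I, B x) ^ (p - 1) ≤ K * volume I ^ p) :
    ∀ᵐ x, A x * B x ^ (p - 1) ≤ K := by
  have key : ∀ {A : (Fin d → ℝ) → ℝ≥0∞}, Measurable A →
      (∀ I : Set (Fin d → ℝ), IsCube I → ∫⁻ x in I, A x ≠ ∞) →
      ∀ᵐ x, Tendsto (fun r => (∫⁻ y in Metric.closedBall x r, A y) /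
        volume (Metric.closedBall x r)) (𝓝[>] 0) (𝓝 (A x)) ∧ A x ≠ ∞ := by
    intro A hA hAt
    have : IsLocallyFiniteMeasure ((volume : Measure (Fin d → ℝ)).withDensity A) := by
      refine ⟨fun x => ⟨Metric.closedBall x 1, Metric.closedBall_mem_nhds x one_pos, ?_⟩⟩
      rw [withDensity_apply _ Metric.isClosed_closedBall.measurableSet,
        ← setLIntegral_congr (closedBall_ae x one_pos)]
      exact (hAt _ ⟨_, _, by norm_num, rfl⟩).lt_top
    filter_upwards [Besicovitch.ae_tendsto_rnDeriv
        ((volume : Measure (Fin d → ℝ)).withDensity A) volume,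
      Measure.rnDeriv_withDensity (volume : Measure (Fin d → ℝ)) hA,
      Measure.rnDeriv_lt_top ((volume : Measure (Fin d → ℝ)).withDensity A) volume]
      with x h1 h2 h3
    rw [h2] at h1 h3
    refine ⟨h1.congr fun r => ?_, h3.ne⟩
    rw [withDensity_apply _ Metric.isClosed_closedBall.measurableSet]
  filter_upwards [key hA hAt, key hB hBt] with x hx hy
  have hp1 : 0 < p - 1 := by linarith
  have hyp : B x ^ (p - 1) ≠ ∞ := ENNReal.rpow_ne_top_of_nonneg hp1.le hy.2
  have hlim := ENNReal.Tendsto.mul hx.1 (Or.inr hyp)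
    ((ENNReal.continuous_rpow_const (y := p - 1)).tendsto _ |>.comp hy.1) (Or.inr hx.2)
  refine le_of_tendsto hlim ?_
  filter_upwards [self_mem_nhdsWithin] with r hr
  have hr : 0 < r := hr
  have hc : IsCube (cubeOf (fun i => x i - r) (2 * r)) := ⟨_, _, by positivity, rfl⟩
  have hk := hK _ hc
  have hv0 := vol_cube_ne_zero hc
  have hvt := vol_cube_ne_top hc
  rw [setLIntegral_congr (closedBall_ae x hr), setLIntegral_congr (closedBall_ae x hr),
    measure_congr (closedBall_ae x hr)] at hk
  rw [measure_congr (closedBall_ae x hr)] at hv0 hvt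
  simp only [Function.comp]
  rw [ENNReal.div_rpow_of_nonneg _ _ hp1.le]
  set V := volume (Metric.closedBall x r)
  have hV : V ^ p = V * V ^ (p - 1) := by
    conv_lhs => rw [show p = 1 + (p - 1) by ring]
    rw [ENNReal.rpow_add _ _ hv0 hvt, ENNReal.rpow_one]
  have hq0 : V ^ (p - 1) ≠ 0 := by simp [ENNReal.rpow_eq_zero_iff, hv0, hvt]
  have hqt : V ^ (p - 1) ≠ ∞ := by simp [ENNReal.rpow_eq_top_iff, hv0, hvt]
  rw [hV, ← ENNReal.div_le_iff (mul_ne_zero hv0 hq0) (ENNReal.mul_ne_top hvt hqt)] at hk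
  refine le_trans (le_of_eq ?_) hk
  rw [div_eq_mul_inv, div_eq_mul_inv, div_eq_mul_inv,
    ENNReal.mul_inv (Or.inl hv0) (Or.inl hvt)]
  rw [mul_mul_mul_comm]

/-- From rational cubes to all cubes. -/
lemma rat_cubes {d : ℕ} {p : ℝ} (hp : 1 < p) {A B : (Fin d → ℝ) → ℝ≥0∞} {K : ℝ≥0∞}
    (hKt : K ≠ ∞)
    (hK : ∀ (a : Fin d → ℚ) (h : ℚ), 0 < h →
      (∫⁻ x in cubeOf (fun i => (a i : ℝ)) (h : ℝ), A x) *
        (∫⁻ x in cubeOf (fun i => (a i : ℝ)) (h : ℝ), B x) ^ (p - 1) ≤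
      K * volume (cubeOf (fun i => (a i : ℝ)) (h : ℝ)) ^ p)
    (I : Set (Fin d → ℝ)) (hI : IsCube I) :
    (∫⁻ x in I, A x) * (∫⁻ x in I, B x) ^ (p - 1) ≤ K * volume I ^ p := by
  obtain ⟨a, h, hh, rfl⟩ := hI
  have hp1 : 0 < p - 1 := by linarith
  have main : ∀ δ : ℝ, 0 < δ →
      (∫⁻ x in cubeOf a h, A x) * (∫⁻ x in cubeOf a h, B x) ^ (p - 1) ≤
        K * (ENNReal.ofReal ((h + 2 * δ) ^ d)) ^ p := by
    intro δ hδ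
    have ha : ∀ i, ∃ q : ℚ, a i - δ < q ∧ (q : ℝ) < a i := fun i =>
      exists_rat_btwn (by linarith)
    choose a' ha1 ha2 using ha
    obtain ⟨h', h1, h2⟩ := exists_rat_btwn (show h + δ < h + 2 * δ by linarith)
    have hh' : (0 : ℝ) < h' := by linarith
    have hsub : cubeOf a h ⊆ cubeOf (fun i => (a' i : ℝ)) (h' : ℝ) := by
      refine Set.pi_mono fun i _ => Set.Ico_subset_Ico (ha2 i).le ?_
      linarith [ha1 i]
    calc _ ≤ (∫⁻ x in cubeOf (fun i => (a' i : ℝ)) (h' : ℝ), A x) *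
        (∫⁻ x in cubeOf (fun i => (a' i : ℝ)) (h' : ℝ), B x) ^ (p - 1) :=
          mul_le_mul' (lintegral_mono_set hsub)
            (ENNReal.rpow_le_rpow (lintegral_mono_set hsub) hp1.le)
      _ ≤ _ := hK a' h' (by exact_mod_cast hh')
      _ ≤ _ := by
        rw [vol_cube _ hh']
        gcongr
  rw [vol_cube a hh]
  have hlim : Tendsto (fun δ : ℝ => K * (ENNReal.ofReal ((h + 2 * δ) ^ d)) ^ p) (𝓝[>] 0)
      (𝓝 (K * (ENNReal.ofReal ((h + 2 * 0) ^ d)) ^ p)) := by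
    apply ENNReal.Tendsto.const_mul _ (Or.inr hKt)
    apply (ENNReal.continuous_rpow_const (y := p)).tendsto _ |>.comp
    apply (ENNReal.continuous_ofReal.tendsto _).comp
    apply Tendsto.mono_left _ nhdsWithin_le_nhds
    exact Continuous.tendsto (f := fun δ : ℝ => (h + 2 * δ) ^ d) (by fun_prop) 0
  simp only [mul_zero, add_zero] at hlim
  refine ge_of_tendsto hlim ?_
  filter_upwards [self_mem_nhdsWithin] with δ hδ using main δ hδ

/-- Slices of a bi-parameter weight. -/
lemma slices {d₁ d₂ : ℕ} {p : ℝ} (hp : 1 < p) {W S : (Fin d₁ → ℝ) → (Fin d₂ → ℝ) → ℝ≥0∞}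
    (hW : Measurable (Function.uncurry W)) (hS : Measurable (Function.uncurry S)) {K : ℝ≥0∞}
    (hKt : K ≠ ∞)
    (hWt : ∀ I J, IsCube I → IsCube J → ∫⁻ x in I, ∫⁻ y in J, W x y ≠ ∞)
    (hSt : ∀ I J, IsCube I → IsCube J → ∫⁻ x in I, ∫⁻ y in J, S x y ≠ ∞)
    (hK : ∀ I J, IsCube I → IsCube J → (∫⁻ x in I, ∫⁻ y in J, W x y) *
      (∫⁻ x in I, ∫⁻ y in J, S x y) ^ (p - 1) ≤ K * (volume I * volume J) ^ p) :
    ∀ᵐ x, ∀ J, IsCube J → (∫⁻ y in J, W x y) * (∫⁻ y in J, S x y) ^ (p - 1)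
      ≤ K * volume J ^ p := by
  have h1 : ∀ J : Set (Fin d₂ → ℝ), IsCube J → ∀ᵐ x,
      (∫⁻ y in J, W x y) * (∫⁻ y in J, S x y) ^ (p - 1) ≤ K * volume J ^ p := by
    intro J hJ
    refine diff_step hp hW.lintegral_prod_right hS.lintegral_prod_right
      (fun I hI => hWt I J hI hJ) (fun I hI => hSt I J hI hJ) (fun I hI => ?_)
    refine (hK I J hI hJ).trans (le_of_eq ?_)
    rw [ENNReal.mul_rpow_of_nonneg _ _ (by linarith)]
    ring
  have h2 : ∀ᵐ x, ∀ (a : Fin d₂ → ℚ) (h : ℚ), 0 < h →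
      (∫⁻ y in cubeOf (fun i => (a i : ℝ)) (h : ℝ), W x y) *
        (∫⁻ y in cubeOf (fun i => (a i : ℝ)) (h : ℝ), S x y) ^ (p - 1) ≤
      K * volume (cubeOf (fun i => (a i : ℝ)) (h : ℝ)) ^ p := by
    rw [ae_all_iff]
    intro a
    rw [ae_all_iff]
    intro h
    by_cases hh : 0 < h
    · filter_upwards [h1 (cubeOf (fun i => (a i : ℝ)) (h : ℝ))
        ⟨_, _, by exact_mod_cast hh, rfl⟩] with x hx _ using hx
    · exact Eventually.of_forall fun x hx => absurd hx hh
  filter_upwards [h2] with x hx J hJ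
  exact rat_cubes hp hKt hx J hJ

/-- Composition of the two averaging operators. -/
lemma compose {d₁ d₂ : ℕ} {p : ℝ} (hp : 1 < p) {W S f : (Fin d₁ → ℝ) → (Fin d₂ → ℝ) → ℝ≥0∞}
    (hW : Measurable (Function.uncurry W))
    (hf : Measurable (Function.uncurry f)) {M : ℝ≥0∞}
    {I : Set (Fin d₁ → ℝ)} {J : Set (Fin d₂ → ℝ)}
    (hgood : ∀ᵐ x, ∀ᵐ y, W x y ≠ ∞ ∧ W x y ≠ 0 ∧ S x y = W x y ^ (-(1 / (p - 1))))
    (hgood' : ∀ᵐ y, ∀ᵐ x, W x y ≠ ∞ ∧ W x y ≠ 0 ∧ S x y = W x y ^ (-(1 / (p - 1))))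
    (h1 : ∀ᵐ x, (∫⁻ y in J, W x y) * (∫⁻ y in J, S x y) ^ (p - 1) ≤ M * volume J ^ p)
    (h2 : ∀ᵐ y, (∫⁻ x in I, W x y) * (∫⁻ x in I, S x y) ^ (p - 1) ≤ M * volume I ^ p) :
    (∫⁻ x in I, ∫⁻ y in J, f x y) ^ p * (∫⁻ x in I, ∫⁻ y in J, W x y) ≤
      M ^ (2 : ℝ) * (volume I * volume J) ^ p * (∫⁻ x in I, ∫⁻ y in J, f x y ^ p * W x y) := by
  have hg : Measurable fun x => ∫⁻ y in J, f x y := hf.lintegral_prod_right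
  have hp0 : 0 < p := by linarith
  have hW1 : ∀ x, Measurable (W x) := fun x => hW.of_uncurry_left
  have hW2 : ∀ y, Measurable (fun x => W x y) := fun y => hW.of_uncurry_right
  have hf1 : ∀ x, Measurable (f x) := fun x => hf.of_uncurry_left
  have step1 : ∀ᵐ y, (∫⁻ x in I, ∫⁻ y in J, f x y) ^ p * (∫⁻ x in I, W x y) ≤
      M * volume I ^ p * ∫⁻ x in I, (∫⁻ y in J, f x y) ^ p * W x y := by
    filter_upwards [h2, hgood'] with y hy hgy
    have hgy := ae_restrict_of_ae (s := I) hgy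
    have hh := holder_avg hp (volume.restrict I) hg (hW2 y) (hgy.mono fun _ h => h.1)
      (hgy.mono fun _ h => h.2.1) (hgy.mono fun _ h => h.2.2)
    calc _ ≤ _ := mul_le_mul_left hh _
      _ = (∫⁻ x in I, (∫⁻ y in J, f x y) ^ p * W x y) *
          ((∫⁻ x in I, W x y) * (∫⁻ x in I, S x y) ^ (p - 1)) := by ring
      _ ≤ _ := mul_le_mul_right hy _
      _ = _ := by ring
  have step2 : ∀ᵐ x, (∫⁻ y in J, f x y) ^ p * (∫⁻ y in J, W x y) ≤
      M * volume J ^ p * ∫⁻ y in J, f x y ^ p * W x y := by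
    filter_upwards [h1, hgood] with x hx hgx
    have hgx := ae_restrict_of_ae (s := J) hgx
    have hh := holder_avg hp (volume.restrict J) (hf1 x) (hW1 x) (hgx.mono fun _ h => h.1)
      (hgx.mono fun _ h => h.2.1) (hgx.mono fun _ h => h.2.2)
    calc _ ≤ _ := mul_le_mul_left hh _
      _ = (∫⁻ y in J, f x y ^ p * W x y) *
          ((∫⁻ y in J, W x y) * (∫⁻ y in J, S x y) ^ (p - 1)) := by ring
      _ ≤ _ := mul_le_mul_right hx _
      _ = _ := by ring
  have hm1 : Measurable (Function.uncurry fun x y => (∫⁻ y in J, f x y) ^ p * W x y) :=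
    ((hg.comp measurable_fst).pow_const p).mul hW
  have hm2 : Measurable (Function.uncurry fun x y => f x y ^ p * W x y) :=
    (hf.pow_const p).mul hW
  calc (∫⁻ x in I, ∫⁻ y in J, f x y) ^ p * (∫⁻ x in I, ∫⁻ y in J, W x y)
      = ∫⁻ y in J, (∫⁻ x in I, ∫⁻ y in J, f x y) ^ p * (∫⁻ x in I, W x y) := by
        rw [lintegral_const_mul _ (hW.lintegral_prod_left), lintegral_lintegral_swap hW.aemeasurable]
    _ ≤ ∫⁻ y in J, M * volume I ^ p * ∫⁻ x in I, (∫⁻ y in J, f x y) ^ p * W x y :=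
        lintegral_mono_ae (ae_restrict_of_ae step1)
    _ = M * volume I ^ p * ∫⁻ x in I, ∫⁻ z in J, (∫⁻ y in J, f x y) ^ p * W x z := by
        rw [lintegral_const_mul _ (hm1.lintegral_prod_left),
          lintegral_lintegral_swap hm1.aemeasurable]
    _ = M * volume I ^ p * ∫⁻ x in I, (∫⁻ y in J, f x y) ^ p * ∫⁻ y in J, W x y := by
        congr 1
        apply lintegral_congr
        intro x
        rw [lintegral_const_mul _ (hW1 x)]
    _ ≤ M * volume I ^ p * ∫⁻ x in I, M * volume J ^ p * ∫⁻ y in J, f x y ^ p * W x y :=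
        mul_le_mul_right (lintegral_mono_ae (ae_restrict_of_ae step2)) _
    _ = _ := by
        rw [lintegral_const_mul _ (hm2.lintegral_prod_right),
          ENNReal.mul_rpow_of_nonneg _ _ hp0.le, ENNReal.rpow_two]
        ring

/-- Upper bound for the bi-parameter ratio. -/
lemma upper {d₁ d₂ : ℕ} {p : ℝ} (hp : 1 < p) {W S : (Fin d₁ → ℝ) → (Fin d₂ → ℝ) → ℝ≥0∞}
    (hW : Measurable (Function.uncurry W)) (hS : Measurable (Function.uncurry S)) {M : ℝ≥0∞}
    {I : Set (Fin d₁ → ℝ)} {J : Set (Fin d₂ → ℝ)} (hI : IsCube I) (hJ : IsCube J)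
    (hgood : ∀ᵐ x, ∀ᵐ y, W x y ≠ ∞ ∧ W x y ≠ 0 ∧ S x y = W x y ^ (-(1 / (p - 1))))
    (hgood' : ∀ᵐ y, ∀ᵐ x, W x y ≠ ∞ ∧ W x y ≠ 0 ∧ S x y = W x y ^ (-(1 / (p - 1))))
    (hS0 : ∫⁻ x in I, ∫⁻ y in J, S x y ≠ 0)
    (h1 : ∀ᵐ x, (∫⁻ y in J, W x y) * (∫⁻ y in J, S x y) ^ (p - 1) ≤ M * volume J ^ p)
    (h2 : ∀ᵐ y, (∫⁻ x in I, W x y) * (∫⁻ x in I, S x y) ^ (p - 1) ≤ M * volume I ^ p) :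
    (∫⁻ x in I, ∫⁻ y in J, W x y) * (∫⁻ x in I, ∫⁻ y in J, S x y) ^ (p - 1) ≤
      M ^ (2 : ℝ) * (volume I * volume J) ^ p := by
  have hp1 : 0 < p - 1 := by linarith
  set f : ℕ → (Fin d₁ → ℝ) → (Fin d₂ → ℝ) → ℝ≥0∞ := fun n x y => min (S x y) n with hfdef
  have hf : ∀ n, Measurable (Function.uncurry (f n)) := fun n => hS.min measurable_const
  have hfm : ∀ x y, Monotone fun n => f n x y := by
    intro x y m n hmn
    exact min_le_min le_rfl (by exact_mod_cast hmn)
  have hft : ∀ x y, Tendsto (fun n => f n x y) atTop (𝓝 (S x y)) := by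
    intro x y
    have := (tendsto_const_nhds (x := S x y)).min ENNReal.tendsto_nat_nhds_top
    simpa using this
  have hlim : Tendsto (fun n => ∫⁻ x in I, ∫⁻ y in J, f n x y) atTop
      (𝓝 (∫⁻ x in I, ∫⁻ y in J, S x y)) := by
    apply lintegral_tendsto_of_tendsto_of_monotone
    · exact fun n => (hf n).lintegral_prod_right.aemeasurable
    · exact Eventually.of_forall fun x m n hmn => lintegral_mono fun y => hfm x y hmn
    · refine Eventually.of_forall fun x => ?_
      apply lintegral_tendsto_of_tendsto_of_monotone
      · exact fun n => (hf n).of_uncurry_left.aemeasurable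
      · exact Eventually.of_forall fun y => hfm x y
      · exact Eventually.of_forall fun y => hft x y
  have hlim2 : Tendsto (fun n => (∫⁻ x in I, ∫⁻ y in J, f n x y) ^ (p - 1) *
      (∫⁻ x in I, ∫⁻ y in J, W x y)) atTop
      (𝓝 ((∫⁻ x in I, ∫⁻ y in J, S x y) ^ (p - 1) * (∫⁻ x in I, ∫⁻ y in J, W x y))) := by
    apply ENNReal.Tendsto.mul_const
    · exact (ENNReal.continuous_rpow_const (y := p - 1)).tendsto _ |>.comp hlim
    · left
      simp [ENNReal.rpow_eq_zero_iff, hS0, hp1, not_lt.2 hp1.le]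
  rw [mul_comm]
  refine le_of_tendsto hlim2 ?_
  filter_upwards [hlim.eventually_ne hS0] with n hn
  have hnt : ∫⁻ x in I, ∫⁻ y in J, f n x y ≠ ∞ := by
    refine ne_top_of_le_ne_top ?_ (lintegral_mono (g := fun _ => ∫⁻ y in J, (n : ℝ≥0∞))
      fun x => lintegral_mono fun y => min_le_right _ _)
    simp only [lintegral_const, Measure.restrict_apply_univ]
    exact ENNReal.mul_ne_top (ENNReal.mul_ne_top (by simp) (vol_cube_ne_top hJ))
      (vol_cube_ne_top hI)
  have hc := compose (f := f n) (I := I) (J := J) hp hW (hf n) hgood hgood' h1 h2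
  have hle : ∫⁻ x in I, ∫⁻ y in J, f n x y ^ p * W x y ≤ ∫⁻ x in I, ∫⁻ y in J, f n x y := by
    refine lintegral_mono_ae (ae_restrict_of_ae ?_)
    filter_upwards [hgood] with x hx
    refine lintegral_mono_ae (ae_restrict_of_ae ?_)
    filter_upwards [hx] with y hy
    obtain ⟨hy1, hy2, hy3⟩ := hy
    have hSW : S x y ^ (p - 1) * W x y = 1 := by
      rw [hy3, ← ENNReal.rpow_mul,
        show -(1 / (p - 1)) * (p - 1) = -1 by field_simp, ENNReal.rpow_neg_one]
      exact ENNReal.inv_mul_cancel hy2 hy1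
    have hfS : f n x y ≤ S x y := min_le_left _ _
    have hsplit : f n x y ^ p = f n x y * f n x y ^ (p - 1) := by
      conv_lhs => rw [show p = 1 + (p - 1) by ring]
      rw [ENNReal.rpow_add_of_nonneg _ _ zero_le_one hp1.le, ENNReal.rpow_one]
    calc f n x y ^ p * W x y = f n x y * (f n x y ^ (p - 1) * W x y) := by
          rw [hsplit, mul_assoc]
      _ ≤ f n x y * (S x y ^ (p - 1) * W x y) := by gcongr
      _ = f n x y := by rw [hSW, mul_one]
  set F := ∫⁻ x in I, ∫⁻ y in J, f n x y
  have hsplit : F ^ p = F * F ^ (p - 1) := by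
    conv_lhs => rw [show p = 1 + (p - 1) by ring]
    rw [ENNReal.rpow_add_of_nonneg _ _ zero_le_one hp1.le, ENNReal.rpow_one]
  have hc2 := hc.trans (mul_le_mul_right hle _)
  rw [hsplit, mul_comm _ F, mul_assoc] at hc2
  exact (ENNReal.mul_le_mul_iff_right hn hnt).1 hc2

/-- The main inequality package. -/
lemma main {d₁ d₂ : ℕ} {p : ℝ} (hp : 1 < p) (w : Pt d₁ d₂ → ℝ) (hw : Measurable w)
    (hpos : ∀ᵐ x ∂(volume : Measure (Pt d₁ d₂)), 0 < w x) :
    max (essSup (fun x₁ => ArCube (ENNReal.ofReal p) (fun x₂ => w (x₁, x₂)))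
                (volume : Measure (Fin d₁ → ℝ)))
        (essSup (fun x₂ => ArCube (ENNReal.ofReal p) (fun x₁ => w (x₁, x₂)))
                (volume : Measure (Fin d₂ → ℝ)))
            ≤ ArRect (ENNReal.ofReal p) w ∧
    ArRect (ENNReal.ofReal p) w ≤
      (max (essSup (fun x₁ => ArCube (ENNReal.ofReal p) (fun x₂ => w (x₁, x₂)))
                (volume : Measure (Fin d₁ → ℝ)))
        (essSup (fun x₂ => ArCube (ENNReal.ofReal p) (fun x₁ => w (x₁, x₂)))
                (volume : Measure (Fin d₂ → ℝ)))) ^ (2 : ℝ) := by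
  have hp1 : 0 < p - 1 := by linarith
  set W : (Fin d₁ → ℝ) → (Fin d₂ → ℝ) → ℝ≥0∞ := fun x y => ENNReal.ofReal (w (x, y)) with hWdef
  set S : (Fin d₁ → ℝ) → (Fin d₂ → ℝ) → ℝ≥0∞ :=
    fun x y => ENNReal.ofReal (w (x, y) ^ (-(1 / (p - 1)))) with hSdef
  have hW : Measurable (Function.uncurry W) := hw.ennreal_ofReal
  have hS : Measurable (Function.uncurry S) := (hw.pow_const _).ennreal_ofReal
  have hW' : Measurable (Function.uncurry fun y x => W x y) := hW.comp measurable_swap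
  have hS' : Measurable (Function.uncurry fun y x => S x y) := hS.comp measurable_swap
  have hp' : ∀ᵐ x : Fin d₁ → ℝ, ∀ᵐ y : Fin d₂ → ℝ, 0 < w (x, y) :=
    Measure.ae_ae_of_ae_prod hpos
  have hp'' : ∀ᵐ y : Fin d₂ → ℝ, ∀ᵐ x : Fin d₁ → ℝ, 0 < w (x, y) :=
    (Measure.ae_ae_comm (p := fun x y => 0 < w (x, y))
      (measurableSet_lt measurable_const hw)).1 hp'
  have good : ∀ x y, 0 < w (x, y) →
      W x y ≠ ∞ ∧ W x y ≠ 0 ∧ S x y = W x y ^ (-(1 / (p - 1))) := by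
    intro x y h
    refine ⟨ENNReal.ofReal_ne_top, by simpa [hWdef] using h, ?_⟩
    simp only [hWdef, hSdef]
    rw [ENNReal.ofReal_rpow_of_pos h]
  have hWRe : ∀ I J, ∫⁻ z in I ×ˢ J, ENNReal.ofReal (w z) = ∫⁻ x in I, ∫⁻ y in J, W x y := by
    intro I J
    rw [Measure.volume_eq_prod, ← Measure.prod_restrict,
      lintegral_prod _ hw.ennreal_ofReal.aemeasurable]
  have hSRe : ∀ I J, ∫⁻ z in I ×ˢ J, ENNReal.ofReal (w z ^ (-(1 / (p - 1)))) =
      ∫⁻ x in I, ∫⁻ y in J, S x y := by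
    intro I J
    rw [Measure.volume_eq_prod, ← Measure.prod_restrict,
      lintegral_prod _ (hw.pow_const _).ennreal_ofReal.aemeasurable]
  have hvol : ∀ (I : Set (Fin d₁ → ℝ)) (J : Set (Fin d₂ → ℝ)),
      volume (I ×ˢ J) = volume I * volume J := by
    intro I J
    rw [Measure.volume_eq_prod, Measure.prod_prod]
  have hratio : ∀ (I : Set (Fin d₁ → ℝ)) (J : Set (Fin d₂ → ℝ)) (K : ℝ≥0∞), IsCube I → IsCube J →
      (ArRatio (ENNReal.ofReal p) (I ×ˢ J) w ≤ K ↔ (∫⁻ x in I, ∫⁻ y in J, W x y) *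
      (∫⁻ x in I, ∫⁻ y in J, S x y) ^ (p - 1) ≤ K * (volume I * volume J) ^ p) := by
    intro I J K hI hJ
    rw [ratio_le_iff hp, hWRe, hSRe, hvol]
    · rw [hvol]
      exact mul_ne_zero (vol_cube_ne_zero hI) (vol_cube_ne_zero hJ)
    · rw [hvol]
      exact ENNReal.mul_ne_top (vol_cube_ne_top hI) (vol_cube_ne_top hJ)
  have pos_aux : ∀ g : Pt d₁ d₂ → ℝ, Measurable g → (∀ᵐ z, 0 < g z) → ∀ I J, IsCube I → IsCube J →
      ∫⁻ z in I ×ˢ J, ENNReal.ofReal (g z) ≠ 0 := by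
    intro g hg hg0 I J hI hJ h0
    rw [lintegral_eq_zero_iff hg.ennreal_ofReal] at h0
    have hfalse : ∀ᵐ z ∂(volume.restrict (I ×ˢ J)), False := by
      filter_upwards [h0, ae_restrict_of_ae hg0] with z hz1 hz2
      have hz1 : ENNReal.ofReal (g z) = 0 := hz1
      rw [ENNReal.ofReal_eq_zero] at hz1
      linarith
    rw [eventually_false_iff_eq_bot, ae_eq_bot, Measure.restrict_eq_zero, hvol] at hfalse
    exact mul_ne_zero (vol_cube_ne_zero hI) (vol_cube_ne_zero hJ) hfalse
  have hW0 : ∀ I J, IsCube I → IsCube J → ∫⁻ x in I, ∫⁻ y in J, W x y ≠ 0 := by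
    intro I J hI hJ
    rw [← hWRe]
    exact pos_aux w hw hpos I J hI hJ
  have hS0 : ∀ I J, IsCube I → IsCube J → ∫⁻ x in I, ∫⁻ y in J, S x y ≠ 0 := by
    intro I J hI hJ
    rw [← hSRe]
    exact pos_aux _ (hw.pow_const _) (hpos.mono fun z hz => Real.rpow_pos_of_pos hz _) I J hI hJ
  constructor
  · by_cases hKt : ArRect (ENNReal.ofReal p) w = ∞
    · rw [hKt]
      exact le_top
    set K := ArRect (ENNReal.ofReal p) w with hKdef
    have hK : ∀ I J, IsCube I → IsCube J → (∫⁻ x in I, ∫⁻ y in J, W x y) *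
      (∫⁻ x in I, ∫⁻ y in J, S x y) ^ (p - 1) ≤ K * (volume I * volume J) ^ p := by
      intro I J hI hJ
      rw [← hratio I J K hI hJ]
      exact le_iSup₂_of_le (I ×ˢ J) ⟨I, J, hI, hJ, rfl⟩ le_rfl
    have hfin : ∀ I J, IsCube I → IsCube J → (∫⁻ x in I, ∫⁻ y in J, W x y) *
      (∫⁻ x in I, ∫⁻ y in J, S x y) ^ (p - 1) ≠ ∞ := by
      intro I J hI hJ
      refine ne_top_of_le_ne_top ?_ (hK I J hI hJ)
      refine ENNReal.mul_ne_top hKt (ENNReal.rpow_ne_top_of_nonneg (by linarith) ?_)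
      exact ENNReal.mul_ne_top (vol_cube_ne_top hI) (vol_cube_ne_top hJ)
    have hWt : ∀ I J, IsCube I → IsCube J → ∫⁻ x in I, ∫⁻ y in J, W x y ≠ ∞ := by
      intro I J hI hJ h
      apply hfin I J hI hJ
      rw [h, ENNReal.top_mul]
      simp [ENNReal.rpow_eq_zero_iff, hS0 I J hI hJ, not_lt.2 hp1.le]
    have hSt : ∀ I J, IsCube I → IsCube J → ∫⁻ x in I, ∫⁻ y in J, S x y ≠ ∞ := by
      intro I J hI hJ h
      apply hfin I J hI hJ
      rw [h, ENNReal.top_rpow_of_pos hp1, ENNReal.mul_top (hW0 I J hI hJ)]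
    have swW : ∀ (I : Set (Fin d₁ → ℝ)) (J : Set (Fin d₂ → ℝ)),
        ∫⁻ y in J, ∫⁻ x in I, W x y = ∫⁻ x in I, ∫⁻ y in J, W x y := fun I J =>
      lintegral_lintegral_swap hW'.aemeasurable
    have swS : ∀ (I : Set (Fin d₁ → ℝ)) (J : Set (Fin d₂ → ℝ)),
        ∫⁻ y in J, ∫⁻ x in I, S x y = ∫⁻ x in I, ∫⁻ y in J, S x y := fun I J =>
      lintegral_lintegral_swap hS'.aemeasurable
    refine max_le ?_ ?_
    · refine essSup_le_of_ae_le _ ?_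
      filter_upwards [slices hp hW hS hKt hWt hSt hK] with x hx
      refine iSup₂_le fun J hJ => ?_
      rw [ratio_le_iff hp _ _ _ (vol_cube_ne_zero hJ) (vol_cube_ne_top hJ)]
      exact hx J hJ
    · refine essSup_le_of_ae_le _ ?_
      filter_upwards [slices hp hW' hS' hKt
        (fun J I hJ hI => by rw [swW]; exact hWt I J hI hJ)
        (fun J I hJ hI => by rw [swS]; exact hSt I J hI hJ)
        (fun J I hJ hI => by rw [swS, swW, mul_comm (volume J)]; exact hK I J hI hJ)] with y hy
      refine iSup₂_le fun I hI => ?_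
      rw [ratio_le_iff hp _ _ _ (vol_cube_ne_zero hI) (vol_cube_ne_top hI)]
      exact hy I hI
  · refine iSup₂_le fun R hR => ?_
    obtain ⟨I, J, hI, hJ, rfl⟩ := hR
    rw [hratio I J _ hI hJ]
    refine upper hp hW hS hI hJ (hp'.mono fun x hx => hx.mono fun y hy => good x y hy)
      (hp''.mono fun x hx => hx.mono fun y hy => good y x hy) (hS0 I J hI hJ) ?_ ?_
    · filter_upwards [ENNReal.ae_le_essSup (μ := volume)
        (fun x₁ => ArCube (ENNReal.ofReal p) (fun x₂ => w (x₁, x₂)))] with x hx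
      refine (ratio_le_iff hp J (fun y => w (x, y)) _
        (vol_cube_ne_zero hJ) (vol_cube_ne_top hJ)).1 ?_
      exact (le_iSup₂_of_le J hJ le_rfl).trans (hx.trans (le_max_left _ _))
    · filter_upwards [ENNReal.ae_le_essSup (μ := volume)
        (fun x₂ => ArCube (ENNReal.ofReal p) (fun x₁ => w (x₁, x₂)))] with y hy
      refine (ratio_le_iff hp I (fun x => w (x, y)) _
        (vol_cube_ne_zero hI) (vol_cube_ne_top hI)).1 ?_
      exact (le_iSup₂_of_le I hI le_rfl).trans (hy.trans (le_max_right _ _))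

end SliceAp

/-- Slice characterization of bi-parameter `A_p`.
For `1 < p < ∞` there are `C < ∞` and a power `t > 0`, depending only on `p` and the
dimensions, such that for every weight `w`: writing `M` for the maximum of the two essential
suprema of the one-parameter slice characteristics, we have
`[w]_{A_p(ℝ^{d₁}×ℝ^{d₂})} < ∞ ↔ M < ∞`, `M ≤ [w]_{A_p}` and `[w]_{A_p} ≤ C M^t`. -/
theorem statement6 (d₁ d₂ : ℕ) (p : ℝ) (hp : 1 < p) :
    ∃ (C : ℝ≥0∞) (t : ℝ), C < ∞ ∧ 0 < t ∧
      ∀ w : Pt d₁ d₂ → ℝ, Measurable w →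
        (∀ᵐ x ∂(volume : Measure (Pt d₁ d₂)), 0 < w x) →
        ((ArRect (ENNReal.ofReal p) w < ∞ ↔
            max
              (essSup (fun x₁ => ArCube (ENNReal.ofReal p) (fun x₂ => w (x₁, x₂)))
                (volume : Measure (Fin d₁ → ℝ)))
              (essSup (fun x₂ => ArCube (ENNReal.ofReal p) (fun x₁ => w (x₁, x₂)))
                (volume : Measure (Fin d₂ → ℝ))) < ∞) ∧
          max
              (essSup (fun x₁ => ArCube (ENNReal.ofReal p) (fun x₂ => w (x₁, x₂)))
                (volume : Measure (Fin d₁ → ℝ)))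
              (essSup (fun x₂ => ArCube (ENNReal.ofReal p) (fun x₁ => w (x₁, x₂)))
                (volume : Measure (Fin d₂ → ℝ)))
            ≤ ArRect (ENNReal.ofReal p) w ∧
          ArRect (ENNReal.ofReal p) w ≤
            C * (max
              (essSup (fun x₁ => ArCube (ENNReal.ofReal p) (fun x₂ => w (x₁, x₂)))
                (volume : Measure (Fin d₁ → ℝ)))
              (essSup (fun x₂ => ArCube (ENNReal.ofReal p) (fun x₁ => w (x₁, x₂)))
                (volume : Measure (Fin d₂ → ℝ)))) ^ t) := by
  refine ⟨1, 2, ENNReal.one_lt_top, two_pos, fun w hw hpos => ?_⟩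
  obtain ⟨h1, h2⟩ := SliceAp.main hp w hw hpos
  refine ⟨⟨fun h => h1.trans_lt h, fun h => h2.trans_lt ?_⟩, h1, by rwa [one_mul]⟩
  exact ENNReal.rpow_lt_top_of_nonneg zero_le_two h.ne
end

section
/- Fefferman's weighted maximal function bound: Let $p\in(1,\infty)$ and let $\lambda$ be a bi-parameter $A_p$ weight on $\mathbb{R}^{d_1}\times\mathbb{R}^{d_2}$. Define $M^\lambda_{\mathcal{D}}f=\sup_{R\in\mathcal{D}}1_R\,\langle|f|\rangle^\lambda_R$ where $\langle f\rangle_R^\lambda=\frac{1}{\lambda(R)}\int_R f\,\lambda$. Then for all $s\in(1,\infty)$ there is a constant $C$ depending only on $s$, $p$ and the dimensions such that $\|M^\lambda_{\mathcal{D}}f\|_{L^s(\lambda)}\le C\,[\lambda]_{A_p}^{1+1/s}\|f\|_{L^s(\lambda)}$. -/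
open MeasureTheory ENNReal
open scoped Classical

/-- The weighted dyadic maximal function `M^λ_𝒟 f = sup_{R ∈ 𝒟} 1_R ⟨|f|⟩^λ_R`. -/
noncomputable def MDw {d₁ d₂ : ℕ} (lam f : Pt d₁ d₂ → ℝ) (x : Pt d₁ d₂) : ℝ≥0∞ :=
  ⨆ (R : Set (Pt d₁ d₂)) (_ : IsDyadicRect R) (_ : x ∈ R),
    (∫⁻ y in R, ENNReal.ofReal (|f y| * lam y)) / (∫⁻ y in R, ENNReal.ofReal (lam y))


namespace Feff

lemma layer_real (a : ℝ) (ha : -1 < a) (r : ℝ) (hr : 0 ≤ r) :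
    ∫⁻ t in Set.Ioi (0:ℝ), ENNReal.ofReal (t ^ a) *
      (Set.Iio r).indicator (fun _ => (1:ℝ≥0∞)) t = ENNReal.ofReal (r ^ (a+1) / (a+1)) := by
  have h1 : ∀ t : ℝ, ENNReal.ofReal (t ^ a) * (Set.Iio r).indicator (fun _ => (1:ℝ≥0∞)) t
      = (Set.Iio r).indicator (fun t => ENNReal.ofReal (t ^ a)) t := by
    intro t
    by_cases h : t ∈ Set.Iio r <;> simp [h]
  simp_rw [h1]
  rw [lintegral_indicator measurableSet_Iio, Measure.restrict_restrict measurableSet_Iio,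
    Set.Iio_inter_Ioi, Measure.restrict_congr_set (Ioo_ae_eq_Ioc)]
  have hint := (intervalIntegral.intervalIntegrable_rpow' (a := 0) (b := r) ha)
  rw [intervalIntegrable_iff_integrableOn_Ioc_of_le hr] at hint
  rw [← ofReal_integral_eq_lintegral_ofReal hint, ← intervalIntegral.integral_of_le hr,
    integral_rpow (Or.inl ha), Real.zero_rpow (by linarith), sub_zero]
  rw [Filter.EventuallyLE, ae_restrict_iff' measurableSet_Ioc]
  exact Filter.Eventually.of_forall fun t ht => Real.rpow_nonneg ht.1.le _

lemma layer (a : ℝ) (ha : -1 < a) (x : ℝ≥0∞) :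
    ∫⁻ t in Set.Ioi (0:ℝ), ENNReal.ofReal (t ^ a) *
      {t : ℝ | ENNReal.ofReal t < x}.indicator (fun _ => (1:ℝ≥0∞)) t
      = x ^ (a+1) / ENNReal.ofReal (a+1) := by
  have ha1 : 0 < a + 1 := by linarith
  have key : ∀ r : ℝ, 0 ≤ r → ∫⁻ t in Set.Ioi (0:ℝ), ENNReal.ofReal (t ^ a) *
      (Set.Iio r).indicator (fun _ => (1:ℝ≥0∞)) t
      = ENNReal.ofReal r ^ (a+1) / ENNReal.ofReal (a+1) := by
    intro r hr
    rw [layer_real a ha r hr, ENNReal.ofReal_div_of_pos ha1, ENNReal.ofReal_rpow_of_nonneg hr ha1.le]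
  by_cases hx : x = ⊤
  · subst hx
    rw [ENNReal.top_rpow_of_pos ha1, ENNReal.top_div_of_ne_top ENNReal.ofReal_ne_top]
    have h2 : ∀ n : ℕ, ENNReal.ofReal n ^ (a+1) / ENNReal.ofReal (a+1) ≤
      ∫⁻ t in Set.Ioi (0:ℝ), ENNReal.ofReal (t ^ a) *
      {t : ℝ | ENNReal.ofReal t < ⊤}.indicator (fun _ => (1:ℝ≥0∞)) t := by
      intro n
      rw [← key n (by positivity)]
      refine lintegral_mono fun t => ?_
      gcongr
      simp
    refine top_unique ?_
    have h3 : Filter.Tendsto (fun n : ℕ => ENNReal.ofReal n ^ (a+1) / ENNReal.ofReal (a+1))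
        Filter.atTop (nhds ⊤) := by
      have : Filter.Tendsto (fun n : ℕ => ENNReal.ofReal n ^ (a+1))
        Filter.atTop (nhds ⊤) := by
        have h4 : Filter.Tendsto (fun n : ℕ => ENNReal.ofReal n) Filter.atTop (nhds ⊤) := by
          simpa using ENNReal.tendsto_nat_nhds_top
        have := (ENNReal.continuous_rpow_const (y := a+1)).tendsto ⊤
        rw [ENNReal.top_rpow_of_pos ha1] at this
        exact this.comp h4
      have h5 := ENNReal.Tendsto.div_const this (b := ENNReal.ofReal (a+1)) (Or.inl (by simp))
      rwa [ENNReal.top_div_of_ne_top ENNReal.ofReal_ne_top] at h5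
    exact le_of_tendsto' h3 h2
  · have := key x.toReal ENNReal.toReal_nonneg
    rw [ENNReal.ofReal_toReal hx] at this
    rw [← this]
    refine setLIntegral_congr_fun measurableSet_Ioi fun t ht => ?_
    have : t ∈ {t : ℝ | ENNReal.ofReal t < x} ↔ t ∈ Set.Iio x.toReal := by
      simp only [Set.mem_ofPred_eq, Set.mem_Iio]
      exact ENNReal.ofReal_lt_iff_lt_toReal (le_of_lt ht) hx
    by_cases h : t ∈ Set.Iio x.toReal
    · simp [this.2 h, Set.indicator_of_mem h]
    · simp [mt this.1 h, Set.indicator_of_notMem h]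

lemma layer_int {X : Type*} [MeasurableSpace X] (μ : Measure X) [SFinite μ]
    (a : ℝ) (ha : -1 < a) (G w : X → ℝ≥0∞) (hG : Measurable G) (hw : Measurable w) :
    ∫⁻ x, w x * (G x ^ (a+1) / ENNReal.ofReal (a+1)) ∂μ =
      ∫⁻ t in Set.Ioi (0:ℝ), ENNReal.ofReal (t ^ a) *
        ∫⁻ x in {x | ENNReal.ofReal t < G x}, w x ∂μ := by
  have hm : MeasurableSet {q : X × ℝ | ENNReal.ofReal q.2 < G q.1} :=
    measurableSet_lt (by fun_prop) (by fun_prop)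
  calc _ = ∫⁻ x, (∫⁻ t in Set.Ioi (0:ℝ), w x * (ENNReal.ofReal (t ^ a) *
      {q : X × ℝ | ENNReal.ofReal q.2 < G q.1}.indicator (fun _ => (1:ℝ≥0∞)) (x,t))) ∂μ := by
        refine lintegral_congr fun x => ?_
        rw [← layer a ha (G x), lintegral_const_mul]
        · rfl
        · refine Measurable.mul (by fun_prop) ?_
          exact measurable_const.indicator (measurableSet_lt (by fun_prop) (by fun_prop))
    _ = ∫⁻ t in Set.Ioi (0:ℝ), ∫⁻ x, w x * (ENNReal.ofReal (t ^ a) *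
      {q : X × ℝ | ENNReal.ofReal q.2 < G q.1}.indicator (fun _ => (1:ℝ≥0∞)) (x,t)) ∂μ := by
        rw [lintegral_lintegral_swap]
        refine Measurable.aemeasurable ?_
        refine Measurable.mul (by fun_prop) (Measurable.mul (by fun_prop) ?_)
        exact measurable_const.indicator hm
    _ = _ := by
        refine lintegral_congr fun t => ?_
        have hmt : MeasurableSet {x | ENNReal.ofReal t < G x} :=
          measurableSet_lt (by fun_prop) (by fun_prop)
        rw [← lintegral_indicator hmt, ← lintegral_const_mul]
        · refine lintegral_congr fun x => ?_
          by_cases h : ENNReal.ofReal t < G x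
          · simp [Set.indicator, h, mul_comm]
          · simp [Set.indicator, h]
        · exact hw.indicator hmt

lemma weak_strong {X : Type*} [MeasurableSpace X] (μ : Measure X) [SFinite μ]
    (s : ℝ) (hs : 1 < s) (G h : X → ℝ≥0∞) (hG : Measurable G) (hh : Measurable h)
    (a b : ℝ≥0∞) (hb0 : b ≠ 0) (hbt : b ≠ ⊤)
    (H : ∀ t : ℝ, 0 < t → ENNReal.ofReal t * μ {x | ENNReal.ofReal t < G x} ≤
      a * ∫⁻ x in {x | ENNReal.ofReal t * b < h x}, h x ∂μ) :
    ∫⁻ x, G x ^ s ∂μ ≤ ENNReal.ofReal (s / (s-1)) * a * b⁻¹ ^ (s-1) * ∫⁻ x, h x ^ s ∂μ := by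
  have hs0 : 0 < s := by linarith
  have h1 := layer_int μ (s-1) (by linarith) G (fun _ => 1) hG measurable_const
  have h2 := layer_int μ (s-2) (by linarith) (fun x => h x / b) h (hh.div_const b) hh
  simp only [one_mul, lintegral_const, MeasurableSet.univ, Measure.restrict_apply,
    Set.univ_inter, sub_add_cancel] at h1
  have e2 : s - 2 + 1 = s - 1 := by ring
  rw [e2] at h2
  have h3 : ∫⁻ x, G x ^ s / ENNReal.ofReal s ∂μ ≤
      a * ∫⁻ x, h x * ((h x / b) ^ (s-1) / ENNReal.ofReal (s-1)) ∂μ := by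
    rw [h1, h2]
    have : Measurable fun t : ℝ => ENNReal.ofReal (t ^ (s-2)) *
        ∫⁻ x in {x | ENNReal.ofReal t < h x / b}, h x ∂μ := by
      refine Measurable.mul (by fun_prop) ?_
      have hmt : ∀ t : ℝ, MeasurableSet {x | ENNReal.ofReal t < h x / b} := fun t =>
          measurableSet_lt (by fun_prop) (by fun_prop)
      simp_rw [← lintegral_indicator (hmt _)]
      refine Measurable.lintegral_prod_right' (f := fun q : ℝ × X =>
        {x | ENNReal.ofReal q.1 < h x / b}.indicator h q.2) ?_
      have : Measurable ({q : ℝ × X | ENNReal.ofReal q.1 < h q.2 / b}.indicator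
          (fun q => h q.2)) :=
        (hh.comp measurable_snd).indicator (measurableSet_lt (by fun_prop) (by fun_prop))
      exact this
    rw [← lintegral_const_mul _ this]
    refine setLIntegral_mono' measurableSet_Ioi fun t ht => ?_
    have ht' : (0:ℝ) < t := ht
    have e3 : ENNReal.ofReal (t ^ (s-1)) = ENNReal.ofReal (t ^ (s-2)) * ENNReal.ofReal t := by
      rw [← ENNReal.ofReal_mul (by positivity)]
      congr 1
      nth_rw 3 [← Real.rpow_one t]
      rw [← Real.rpow_add ht']; congr 1; ring
    have e4 : {x | ENNReal.ofReal t < h x / b} = {x | ENNReal.ofReal t * b < h x} := by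
      ext x
      exact ENNReal.lt_div_iff_mul_lt (Or.inl hb0) (Or.inl hbt)
    rw [e3, e4, mul_assoc, mul_left_comm a]
    exact mul_le_mul_right (H t ht') _
  have e5 : ∀ x, h x * ((h x / b) ^ (s-1) / ENNReal.ofReal (s-1)) =
      (b⁻¹ ^ (s-1) / ENNReal.ofReal (s-1)) * h x ^ s := by
    intro x
    rw [div_eq_mul_inv (h x), ENNReal.mul_rpow_of_nonneg _ _ (by linarith : 0 ≤ s - 1)]
    have : h x ^ s = h x * h x ^ (s-1) := by
      nth_rw 2 [← ENNReal.rpow_one (h x)]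
      rw [← ENNReal.rpow_add_of_nonneg _ _ (by norm_num) (by linarith)]
      congr 1; ring
    rw [this, div_eq_mul_inv, div_eq_mul_inv]; ring
  simp_rw [e5] at h3
  rw [lintegral_const_mul _ (by fun_prop)] at h3
  simp_rw [div_eq_mul_inv (_ ^ s)] at h3
  rw [lintegral_mul_const _ (by fun_prop), ← div_eq_mul_inv,
    ENNReal.div_le_iff (by simpa using hs0) (by simp)] at h3
  refine h3.trans (le_of_eq ?_)
  rw [ENNReal.ofReal_div_of_pos (by linarith), div_eq_mul_inv, div_eq_mul_inv]; ring

/-- Comparison of measures through the fibres of a countably valued map. -/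
lemma fibre_le {X ι : Type*} [MeasurableSpace X] [Countable ι] [MeasurableSpace ι]
    [MeasurableSingletonClass ι] (ψ : X → ι) (hψ : Measurable ψ) (ρ₁ ρ₂ : Measure X)
    (S S' : Set X) (hS : MeasurableSet S) (hS' : MeasurableSet S')
    (H : ∀ i, ρ₁ (S ∩ ψ ⁻¹' {i}) ≤ ρ₂ (S' ∩ ψ ⁻¹' {i})) : ρ₁ S ≤ ρ₂ S' := by
  have key : ∀ (ρ : Measure X) (T : Set X), MeasurableSet T →
      ρ T = ∑' i, ρ (T ∩ ψ ⁻¹' {i}) := by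
    intro ρ T hT
    rw [← measure_iUnion]
    · congr 1; ext x; simp
    · intro i j hij
      refine Set.disjoint_left.2 fun x hx hy => hij ?_
      exact hx.2.symm.trans hy.2
    · intro i; exact hT.inter (hψ (measurableSet_singleton i))
  rw [key _ _ hS, key _ _ hS']
  exact ENNReal.tsum_le_tsum H

lemma weak_nested {X ι : Type*} [MeasurableSpace X] [Countable ι] [MeasurableSpace ι]
    [MeasurableSingletonClass ι] (ψ : ℤ → X → ι) (hψ : ∀ k, Measurable (ψ k))
    (href : ∀ k k' x y, k ≤ k' → ψ k' x = ψ k' y → ψ k x = ψ k y)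
    (μ ρ : Measure X) (c : ℝ≥0∞) (P : ℤ → Set ι)
    (H : ∀ k, ∀ i ∈ P k, c * μ (ψ k ⁻¹' {i}) ≤ ρ (ψ k ⁻¹' {i})) (S : Finset ℤ) :
    c * μ (⋃ k ∈ S, ψ k ⁻¹' (P k)) ≤ ρ (⋃ k ∈ S, ψ k ⁻¹' (P k)) := by
  have hPm : ∀ k, MeasurableSet (ψ k ⁻¹' (P k)) := fun k =>
    hψ k (Set.to_countable _).measurableSet
  induction S using Finset.induction_on_max with
  | empty => simp
  | insert k S hk ih =>
    set E := ⋃ k ∈ S, ψ k ⁻¹' (P k) with hE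
    have hEm : MeasurableSet E := Finset.measurableSet_biUnion _ fun k _ => hPm k
    have e : (⋃ j ∈ insert k S, ψ j ⁻¹' (P j)) = E ∪ (ψ k ⁻¹' (P k) \ E) := by
      rw [Finset.set_biUnion_insert, Set.union_sdiff_self, Set.union_comm]
    have hDm : MeasurableSet (ψ k ⁻¹' (P k) \ E) := (hPm k).diff hEm
    rw [e, measure_union Set.disjoint_sdiff_right hDm,
      measure_union Set.disjoint_sdiff_right hDm, mul_add]
    refine add_le_add ih ?_
    have : (c • μ) (ψ k ⁻¹' (P k) \ E) ≤ ρ (ψ k ⁻¹' (P k) \ E) := by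
      refine fibre_le (ψ k) (hψ k) _ _ _ _ hDm hDm fun i => ?_
      rcases Set.eq_empty_or_nonempty ((ψ k ⁻¹' (P k) \ E) ∩ ψ k ⁻¹' {i}) with h0 | ⟨x, hx⟩
      · simp [h0]
      · have : (ψ k ⁻¹' (P k) \ E) ∩ ψ k ⁻¹' {i} = ψ k ⁻¹' {i} := by
          refine Set.inter_eq_right.2 fun y hy => ?_
          have hxi : ψ k x = i := hx.2
          have hyi : ψ k y = i := hy
          have hxP : ψ k x ∈ P k := hx.1.1
          refine ⟨by change ψ k y ∈ P k; rw [hyi, ← hxi]; exact hxP, fun hyE => hx.1.2 ?_⟩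
          simp only [hE, Set.mem_iUnion, Set.mem_preimage] at hyE ⊢
          obtain ⟨j, hj, hjy⟩ := hyE
          refine ⟨j, hj, ?_⟩
          rwa [href j k x y (hk j hj).le (hxi.trans hyi.symm)]
        rw [this]
        refine H k i ?_
        rw [← (show ψ k x = i from hx.2)]; exact hx.1.1
    simpa using this

end Feff

namespace Feff

lemma finsup_meas {X ι : Type*} [MeasurableSpace X] (l : Finset ι) (h : ι → X → ℝ≥0∞)
    (hm : ∀ i ∈ l, Measurable (h i)) : Measurable fun x => ⨆ i ∈ l, h i x :=
  Measurable.biSup (l : Set ι) l.countable_toSet hm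

section Abstract

variable {X₁ X₂ ι₁ ι₂ : Type*} [MeasurableSpace X₁] [MeasurableSpace X₂]
  [Countable ι₁] [MeasurableSpace ι₁] [MeasurableSingletonClass ι₁]
  [Countable ι₂] [MeasurableSpace ι₂] [MeasurableSingletonClass ι₂]

/-- Abstract dyadic rectangle with index `(k₁, i₁, k₂, i₂)`. -/
def rect (φ₁ : ℤ → X₁ → ι₁) (φ₂ : ℤ → X₂ → ι₂) (q : ℤ × ι₁ × ℤ × ι₂) : Set (X₁ × X₂) :=
  (φ₁ q.1 ⁻¹' {q.2.1}) ×ˢ (φ₂ q.2.2.1 ⁻¹' {q.2.2.2})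

/-- average with respect to `μ` -/
noncomputable def av {X : Type*} [MeasurableSpace X] (μ : Measure X) (f : X → ℝ≥0∞) (Q : Set X) :
    ℝ≥0∞ := (∫⁻ x in Q, f x ∂μ) / μ Q

/-- maximal function along the scales `k ∈ S` of the second parameter, first scale `K` -/
noncomputable def gK (φ₁ : ℤ → X₁ → ι₁) (φ₂ : ℤ → X₂ → ι₂) (μ : Measure (X₁ × X₂))
    (f : X₁ × X₂ → ℝ≥0∞) (K : ℤ) (S : Finset ℤ) (x : X₁ × X₂) : ℝ≥0∞ :=
  ⨆ k ∈ S, av μ f (rect φ₁ φ₂ (K, φ₁ K x.1, k, φ₂ k x.2))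

lemma rect_meas {φ₁ : ℤ → X₁ → ι₁} {φ₂ : ℤ → X₂ → ι₂}
    (h₁ : ∀ k, Measurable (φ₁ k)) (h₂ : ∀ k, Measurable (φ₂ k)) (q) :
    MeasurableSet (rect φ₁ φ₂ q) :=
  (h₁ _ (measurableSet_singleton _)).prod (h₂ _ (measurableSet_singleton _))

lemma gK_meas {φ₁ : ℤ → X₁ → ι₁} {φ₂ : ℤ → X₂ → ι₂}
    (h₁ : ∀ k, Measurable (φ₁ k)) (h₂ : ∀ k, Measurable (φ₂ k)) (μ : Measure (X₁ × X₂))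
    (f : X₁ × X₂ → ℝ≥0∞) (K : ℤ) (S : Finset ℤ) : Measurable (gK φ₁ φ₂ μ f K S) := by
  have hk : ∀ k ∈ S, Measurable (fun x : X₁ × X₂ =>
      av μ f (rect φ₁ φ₂ (K, φ₁ K x.1, k, φ₂ k x.2))) := by
    intro k _
    have h : Measurable (fun i : ι₁ × ι₂ => av μ f (rect φ₁ φ₂ (K, i.1, k, i.2))) :=
      measurable_of_countable _
    have h' : Measurable (fun x : X₁ × X₂ => (φ₁ K x.1, φ₂ k x.2)) :=
      ((h₁ K).comp measurable_fst).prodMk ((h₂ k).comp measurable_snd)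
    have h4 := h.comp h'
    simp only [Function.comp_def] at h4
    exact h4
  have h3 := finsup_meas S _ hk
  unfold gK
  exact h3

lemma doob {φ₁ : ℤ → X₁ → ι₁} {φ₂ : ℤ → X₂ → ι₂}
    (h₁ : ∀ k, Measurable (φ₁ k)) (h₂ : ∀ k, Measurable (φ₂ k))
    (r₂ : ∀ k k' x y, k ≤ k' → φ₂ k' x = φ₂ k' y → φ₂ k x = φ₂ k y)
    (μ : Measure (X₁ × X₂)) [SFinite μ] (hfin : ∀ q, μ (rect φ₁ φ₂ q) ≠ ⊤)
    (f : X₁ × X₂ → ℝ≥0∞) (hf : Measurable f) (K : ℤ) (S : Finset ℤ) (s : ℝ) (hs : 1 < s) :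
    ∫⁻ x, gK φ₁ φ₂ μ f K S x ^ s ∂μ ≤
      ENNReal.ofReal (s / (s-1)) * 2 * (2⁻¹ : ℝ≥0∞)⁻¹ ^ (s-1) * ∫⁻ x, f x ^ s ∂μ := by
  refine weak_strong μ s hs _ f (gK_meas h₁ h₂ μ f K S) hf 2 2⁻¹ (by simp) (by simp) ?_
  intro t ht
  set τ := ENNReal.ofReal t with hτ
  have hτt : τ ≠ ⊤ := ENNReal.ofReal_ne_top
  set V := {x | τ * 2⁻¹ < f x} with hV
  have hVm : MeasurableSet V := measurableSet_lt (by fun_prop) hf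
  let ψ : ℤ → X₁ × X₂ → ι₁ × ι₂ := fun k x => (φ₁ K x.1, φ₂ k x.2)
  have hrect : ∀ k i, ψ k ⁻¹' {i} = rect φ₁ φ₂ (K, i.1, k, i.2) := by
    intro k i; ext x; simp [ψ, rect, Prod.ext_iff]
  have hψ : ∀ k, Measurable (ψ k) := fun k =>
    (((h₁ K).comp measurable_fst).prodMk ((h₂ k).comp measurable_snd))
  have key := weak_nested ψ hψ (by
      intro k k' x y hk h
      simp only [ψ, Prod.mk.injEq] at h ⊢
      exact ⟨h.1, r₂ k k' _ _ hk h.2⟩) μ (μ.withDensity (V.indicator f)) (τ * 2⁻¹)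
      (fun k => {i | τ < av μ f (ψ k ⁻¹' {i})}) (by
      intro k i hi
      have hi' : τ < av μ f (ψ k ⁻¹' {i}) := hi
      rw [hrect] at hi' ⊢
      set Q := rect φ₁ φ₂ (K, i.1, k, i.2) with hQ
      have hQm : MeasurableSet Q := rect_meas h₁ h₂ _
      rw [withDensity_apply _ hQm]
      have hQt : μ Q ≠ ⊤ := hfin _
      have h3 : τ * μ Q ≤ ∫⁻ x in Q, f x ∂μ := ENNReal.mul_le_of_le_div hi'.le
      have h4 : ∫⁻ x in Q, f x ∂μ ≤ ∫⁻ x in Q, V.indicator f x ∂μ + τ * 2⁻¹ * μ Q := by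
        rw [← setLIntegral_const, ← lintegral_add_right _ measurable_const]
        refine lintegral_mono fun x => ?_
        by_cases hx : x ∈ V
        · simp [hx]
        · simp only [Set.indicator_of_notMem hx, zero_add]
          exact not_lt.1 hx
      have h5 : τ * μ Q = τ * 2⁻¹ * μ Q + τ * 2⁻¹ * μ Q := by
        rw [← add_mul, ← mul_add, ENNReal.inv_two_add_inv_two, mul_one]
      rw [h5] at h3
      exact ENNReal.le_of_add_le_add_right (by finiteness) (h3.trans h4)) S
  have hset : {x | τ < gK φ₁ φ₂ μ f K S x} =
      ⋃ k ∈ S, ψ k ⁻¹' {i | τ < av μ f (ψ k ⁻¹' {i})} := by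
    ext x
    simp only [hrect, gK, Set.mem_ofPred_eq, lt_iSup_iff, Set.mem_iUnion, Set.mem_preimage, ψ]
  rw [← hset] at key
  have h6 := key.trans (measure_mono (Set.subset_univ _))
  rw [withDensity_apply _ MeasurableSet.univ, Measure.restrict_univ, lintegral_indicator hVm] at h6
  calc τ * μ {x | τ < gK φ₁ φ₂ μ f K S x}
      = 2 * (τ * 2⁻¹ * μ {x | τ < gK φ₁ φ₂ μ f K S x}) := by
        rw [← mul_assoc, mul_left_comm, ENNReal.mul_inv_cancel (by simp) (by simp), mul_one]
    _ ≤ _ := by gcongr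

lemma select {φ₁ : ℤ → X₁ → ι₁} {φ₂ : ℤ → X₂ → ι₂}
    (h₁ : ∀ k, Measurable (φ₁ k)) (h₂ : ∀ k, Measurable (φ₂ k))
    (r₁ : ∀ k k' x y, k ≤ k' → φ₁ k' x = φ₁ k' y → φ₁ k x = φ₁ k y)
    (μ : Measure (X₁ × X₂)) (hfin : ∀ q, μ (rect φ₁ φ₂ q) ≠ ⊤)
    (ν : Measure X₂) (B : ℝ≥0∞)
    (hD : ∀ q : ℤ × ι₁ × ℤ × ι₂, ∀ F : Set X₂, MeasurableSet F → F ⊆ φ₂ q.2.2.1 ⁻¹' {q.2.2.2} →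
      ν (φ₂ q.2.2.1 ⁻¹' {q.2.2.2}) ≤ 2 * ν F →
      μ (rect φ₁ φ₂ q) ≤ B * μ ((φ₁ q.1 ⁻¹' {q.2.1}) ×ˢ F))
    (f : X₁ × X₂ → ℝ≥0∞) (K : ℤ) (S : Finset ℤ) (τ : ℝ≥0∞)
    (l : Finset (ℤ × ι₁ × ℤ × ι₂)) (hlK : ∀ q ∈ l, q.1 ≤ K) (hlS : ∀ q ∈ l, q.2.2.1 ∈ S)
    (hlτ : ∀ q ∈ l, τ < av μ f (rect φ₁ φ₂ q)) :
    ∃ U : Set (X₁ × X₂), MeasurableSet U ∧ μ U ≠ ⊤ ∧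
      (∀ k, (∀ q ∈ l, q.1 ≤ k) → ∀ x y z, φ₁ k x = φ₁ k y → (x, z) ∈ U → (y, z) ∈ U) ∧
      (∀ q ∈ l, ∀ x ∈ rect φ₁ φ₂ q, μ (rect φ₁ φ₂ (K, φ₁ K x.1, q.2.2.1, φ₂ q.2.2.1 x.2)) ≤
        B * μ (rect φ₁ φ₂ (K, φ₁ K x.1, q.2.2.1, φ₂ q.2.2.1 x.2) ∩ U)) ∧
      τ * μ U ≤ B * ∫⁻ x in U, gK φ₁ φ₂ μ f K S x ∂μ := by
  classical
  induction l using Finset.induction_on_max_value (fun q : ℤ × ι₁ × ℤ × ι₂ => q.1) with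
  | empty => exact ⟨∅, by simp⟩
  | insert q l hql hmax ih =>
    obtain ⟨U, hUm, hUt, hinv, hb, hc⟩ := ih (fun q hq => hlK q (Finset.mem_insert_of_mem hq))
      (fun q hq => hlS q (Finset.mem_insert_of_mem hq))
      (fun q hq => hlτ q (Finset.mem_insert_of_mem hq))
    obtain ⟨k₁, i₁, k₂, i₂⟩ := q
    have hkK : k₁ ≤ K := hlK _ (Finset.mem_insert_self _ _)
    have hkS : k₂ ∈ S := hlS _ (Finset.mem_insert_self _ _)
    have hqτ := hlτ _ (Finset.mem_insert_self _ _)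
    set R := rect φ₁ φ₂ (k₁, i₁, k₂, i₂) with hR
    have hRm : MeasurableSet R := rect_meas h₁ h₂ _
    have hinvU : ∀ x y z, φ₁ k₁ x = φ₁ k₁ y → (x, z) ∈ U → (y, z) ∈ U :=
      hinv k₁ hmax
    have hRmem : ∀ x : X₁ × X₂, x ∈ R ↔ φ₁ k₁ x.1 = i₁ ∧ φ₂ k₂ x.2 = i₂ := fun x => by
      simp [hR, rect]
    rcases Set.eq_empty_or_nonempty R with hRe | ⟨x₀, hx₀⟩
    · refine ⟨U, hUm, hUt, fun k hk => hinv k fun q hq => hk q (Finset.mem_insert_of_mem hq),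
        ?_, hc⟩
      intro q hq x hx
      rcases Finset.mem_insert.1 hq with rfl | hq
      · exact absurd hx (by rw [← hR, hRe]; simp)
      · exact hb q hq x hx
    have hx₀' := (hRmem _).1 hx₀
    set F : Set X₂ := Prod.mk x₀.1 ⁻¹' U with hF
    have hFm : MeasurableSet F := measurable_prodMk_left hUm
    set I₂ : Set X₂ := φ₂ k₂ ⁻¹' {i₂} with hI₂
    have hI₂m : MeasurableSet I₂ := h₂ _ (measurableSet_singleton _)
    have hFU : ∀ x : X₁ × X₂, φ₁ k₁ x.1 = i₁ → (x ∈ U ↔ x.2 ∈ F) := by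
      intro x hx
      constructor
      · intro h; exact hinvU x.1 x₀.1 x.2 (hx.trans hx₀'.1.symm) h
      · intro h; exact hinvU x₀.1 x.1 x.2 (hx₀'.1.trans hx.symm) h
    by_cases hcase : ν I₂ ≤ 2 * ν (I₂ ∩ F)
    · refine ⟨U, hUm, hUt, fun k hk => hinv k fun q hq => hk q (Finset.mem_insert_of_mem hq),
        ?_, hc⟩
      intro q hq x hx
      rcases Finset.mem_insert.1 hq with rfl | hq
      · have hx' := (hRmem x).1 hx
        simp only
        rw [hx'.2]
        refine (hD (K, φ₁ K x.1, k₂, i₂) (I₂ ∩ F) (hI₂m.inter hFm) Set.inter_subset_left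
          hcase).trans ?_
        gcongr
        rintro ⟨y, z⟩ ⟨hy, hz, hzF⟩
        refine ⟨⟨hy, hz⟩, ?_⟩
        exact (hFU (y, z) ((r₁ k₁ K _ _ hkK hy).trans hx'.1)).2 hzF
      · exact hb q hq x hx
    · have hcase2 : ν I₂ ≤ 2 * ν (I₂ \ F) := by
        by_contra hcon
        push Not at hcase hcon
        have := ENNReal.add_lt_add hcase hcon
        rw [← mul_add, measure_inter_add_sdiff _ hFm, two_mul] at this
        exact lt_irrefl _ this
      have hRU : MeasurableSet (R \ U) := hRm.diff hUm
      have hgm := gK_meas h₁ h₂ μ f K S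
      have hmain : τ * μ R ≤ B * ∫⁻ x in R \ U, gK φ₁ φ₂ μ f K S x ∂μ := by
        refine (ENNReal.mul_le_of_le_div hqτ.le).trans ?_
        have : (μ.withDensity f) R ≤ (B • μ.withDensity (gK φ₁ φ₂ μ f K S)) (R \ U) := by
          refine fibre_le (fun x : X₁ × X₂ => φ₁ K x.1) ((h₁ K).comp measurable_fst) _ _ _ _ hRm hRU ?_
          intro j
          rcases Set.eq_empty_or_nonempty (R ∩ (fun x : X₁ × X₂ => φ₁ K x.1) ⁻¹' {j}) with h0 | ⟨x, hxR, hxj⟩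
          · simp [h0]
          · have hxj' : φ₁ K x.1 = j := hxj
            have hx' := (hRmem x).1 hxR
            have hJ : ∀ y, φ₁ K y = j → φ₁ k₁ y = i₁ := fun y hy =>
              (r₁ k₁ K _ _ hkK (hy.trans hxj'.symm)).trans hx'.1
            set Q := rect φ₁ φ₂ (K, j, k₂, i₂) with hQ
            have hQm : MeasurableSet Q := rect_meas h₁ h₂ _
            have e1 : R ∩ (fun x : X₁ × X₂ => φ₁ K x.1) ⁻¹' {j} = Q := by
              ext y
              simp only [Set.mem_inter_iff, hRmem, hQ, rect, Set.mem_prod, Set.mem_preimage,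
                Set.mem_singleton_iff]
              constructor
              · rintro ⟨⟨a, b⟩, c⟩; exact ⟨c, b⟩
              · rintro ⟨c, b⟩; exact ⟨⟨hJ _ c, b⟩, c⟩
            set T := (φ₁ K ⁻¹' {j}) ×ˢ (I₂ \ F) with hT
            have hTm : MeasurableSet T :=
              (h₁ _ (measurableSet_singleton _)).prod (hI₂m.diff hFm)
            have e2 : (R \ U) ∩ (fun x : X₁ × X₂ => φ₁ K x.1) ⁻¹' {j} = T := by
              ext y
              simp only [Set.mem_inter_iff, Set.mem_sdiff, hRmem, hT, Set.mem_prod, Set.mem_preimage,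
                Set.mem_singleton_iff, hI₂]
              constructor
              · rintro ⟨⟨⟨a, b⟩, d⟩, c⟩; exact ⟨c, b, fun h => d ((hFU y a).2 h)⟩
              · rintro ⟨c, b, d⟩; exact ⟨⟨⟨hJ _ c, b⟩, fun h => d ((hFU y (hJ _ c)).1 h)⟩, c⟩
            rw [e1, e2, Measure.smul_apply, smul_eq_mul, withDensity_apply _ hQm,
              withDensity_apply _ hTm]
            have h7 : ∫⁻ x in Q, f x ∂μ = av μ f Q * μ Q := by
              unfold av
              by_cases h0 : μ Q = 0
              · rw [h0, mul_zero, setLIntegral_measure_zero _ _ h0]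
              · rw [ENNReal.div_mul_cancel h0 (hfin _)]
            have h8 : μ Q ≤ B * μ T :=
              hD (K, j, k₂, i₂) (I₂ \ F) (hI₂m.diff hFm) Set.sdiff_subset hcase2
            calc ∫⁻ x in Q, f x ∂μ ≤ av μ f Q * (B * μ T) := by rw [h7]; gcongr
              _ = B * ∫⁻ x in T, av μ f Q ∂μ := by rw [setLIntegral_const]; ring
              _ ≤ _ := by
                gcongr 1
                refine setLIntegral_mono hgm ?_
                intro y hy
                have hy1 : φ₁ K y.1 = j := hy.1
                have hy2 : φ₂ k₂ y.2 = i₂ := hy.2.1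
                unfold gK
                refine le_trans ?_ (le_iSup₂_of_le k₂ hkS le_rfl)
                rw [hy1, hy2]
        rwa [Measure.smul_apply, smul_eq_mul, withDensity_apply _ hRm, withDensity_apply _ hRU]
          at this
      refine ⟨U ∪ R, hUm.union hRm, ?_, ?_, ?_, ?_⟩
      · exact (measure_union_lt_top hUt.lt_top (hfin _).lt_top).ne
      · intro k hk x y z hxy hz
        rcases hz with hz | hz
        · exact Or.inl (hinv k (fun q hq => hk q (Finset.mem_insert_of_mem hq)) x y z hxy hz)
        · right
          have hz' := (hRmem _).1 hz
          refine (hRmem _).2 ⟨?_, hz'.2⟩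
          exact (r₁ k₁ k y x (hk _ (Finset.mem_insert_self _ _)) hxy.symm).trans hz'.1
      · intro q hq x hx
        rcases Finset.mem_insert.1 hq with rfl | hq
        · have hx' := (hRmem x).1 hx
          have h9 := hD (K, φ₁ K x.1, k₂, i₂) I₂ hI₂m subset_rfl (by
            rw [two_mul]; exact le_self_add)
          simp only
          rw [hx'.2]
          refine h9.trans ?_
          gcongr
          rintro ⟨y, z⟩ ⟨hy, hz⟩
          refine ⟨⟨hy, hz⟩, Or.inr ?_⟩
          exact (hRmem _).2 ⟨(r₁ k₁ K _ _ hkK hy).trans hx'.1, hz⟩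
        · refine (hb q hq x hx).trans ?_
          gcongr
          exact Set.subset_union_left
      · have e : U ∪ R = U ∪ (R \ U) := by rw [Set.union_sdiff_self]
        calc τ * μ (U ∪ R) ≤ τ * (μ U + μ R) := by gcongr; exact measure_union_le _ _
          _ ≤ B * ∫⁻ x in U, gK φ₁ φ₂ μ f K S x ∂μ + B * ∫⁻ x in R \ U, gK φ₁ φ₂ μ f K S x ∂μ := by
            rw [mul_add]; exact add_le_add hc hmain
          _ = _ := by
            rw [e, lintegral_union hRU Set.disjoint_sdiff_right, mul_add]

lemma finite_bound {φ₁ : ℤ → X₁ → ι₁} {φ₂ : ℤ → X₂ → ι₂}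
    (h₁ : ∀ k, Measurable (φ₁ k)) (h₂ : ∀ k, Measurable (φ₂ k))
    (r₁ : ∀ k k' x y, k ≤ k' → φ₁ k' x = φ₁ k' y → φ₁ k x = φ₁ k y)
    (r₂ : ∀ k k' x y, k ≤ k' → φ₂ k' x = φ₂ k' y → φ₂ k x = φ₂ k y)
    (μ : Measure (X₁ × X₂)) [SFinite μ] (hfin : ∀ q, μ (rect φ₁ φ₂ q) ≠ ⊤)
    (ν : Measure X₂) (B : ℝ≥0∞) (hB0 : B ≠ 0) (hBt : B ≠ ⊤)
    (hD : ∀ q : ℤ × ι₁ × ℤ × ι₂, ∀ F : Set X₂, MeasurableSet F → F ⊆ φ₂ q.2.2.1 ⁻¹' {q.2.2.2} →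
      ν (φ₂ q.2.2.1 ⁻¹' {q.2.2.2}) ≤ 2 * ν F →
      μ (rect φ₁ φ₂ q) ≤ B * μ ((φ₁ q.1 ⁻¹' {q.2.1}) ×ˢ F))
    (f : X₁ × X₂ → ℝ≥0∞) (hf : Measurable f) (s : ℝ) (hs : 1 < s)
    (l : Finset (ℤ × ι₁ × ℤ × ι₂)) :
    ∫⁻ x, (⨆ q ∈ l, (rect φ₁ φ₂ q).indicator (fun _ => av μ f (rect φ₁ φ₂ q)) x) ^ s ∂μ ≤
      (ENNReal.ofReal (s / (s-1)) * (2 * B ^ 2) * (2 * B) ^ (s-1)) *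
      (ENNReal.ofReal (s / (s-1)) * 2 * 2 ^ (s-1)) * ∫⁻ x, f x ^ s ∂μ := by
  classical
  obtain ⟨K, hK⟩ : ∃ K : ℤ, ∀ q ∈ l, q.1 ≤ K := by
    obtain ⟨K, hK⟩ := (l.image (fun q => q.1)).bddAbove
    exact ⟨K, fun q hq => hK (by simpa using ⟨_, _, _, hq⟩)⟩
  let S : Finset ℤ := l.image (fun q => q.2.2.1)
  have hS : ∀ q ∈ l, q.2.2.1 ∈ S := fun q hq => Finset.mem_image_of_mem _ hq
  have hd := doob h₁ h₂ r₂ μ hfin f hf K S s hs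
  rw [inv_inv] at hd
  set g := gK φ₁ φ₂ μ f K S with hg
  have hgm : Measurable g := gK_meas h₁ h₂ μ f K S
  have hGm : Measurable fun x => ⨆ q ∈ l, (rect φ₁ φ₂ q).indicator
      (fun _ => av μ f (rect φ₁ φ₂ q)) x :=
    finsup_meas _ _ fun q _ => measurable_const.indicator (rect_meas h₁ h₂ q)
  have hws := weak_strong μ s hs _ g hGm hgm (2 * B ^ 2) (2 * B)⁻¹
    (by rw [ENNReal.inv_ne_zero]; finiteness) (by rw [ENNReal.inv_ne_top]; simp [hB0]) (by
    intro t ht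
    set τ := ENNReal.ofReal t with hτ
    have hτt : τ ≠ ⊤ := ENNReal.ofReal_ne_top
    set l' := l.filter (fun q => τ < av μ f (rect φ₁ φ₂ q)) with hl'
    obtain ⟨U, hUm, hUt, -, hb, hc⟩ := select h₁ h₂ r₁ μ hfin ν B hD f K S τ l'
      (fun q hq => hK q (Finset.mem_filter.1 hq).1) (fun q hq => hS q (Finset.mem_filter.1 hq).1)
      (fun q hq => (Finset.mem_filter.1 hq).2)
    rw [← hg] at hc
    let ψ : ℤ → X₁ × X₂ → ι₁ × ι₂ := fun k x => (φ₁ K x.1, φ₂ k x.2)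
    have hrect : ∀ k i, ψ k ⁻¹' {i} = rect φ₁ φ₂ (K, i.1, k, i.2) := by
      intro k i; ext x; simp [ψ, rect, Prod.ext_iff]
    have hψ : ∀ k, Measurable (ψ k) := fun k =>
      (((h₁ K).comp measurable_fst).prodMk ((h₂ k).comp measurable_snd))
    have key := weak_nested ψ hψ (by
      intro k k' x y hk h
      simp only [ψ, Prod.mk.injEq] at h ⊢
      exact ⟨h.1, r₂ k k' _ _ hk h.2⟩) μ (B • μ.restrict U) 1
      (fun k => {i | μ (ψ k ⁻¹' {i}) ≤ B * μ (ψ k ⁻¹' {i} ∩ U)}) (by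
        intro k i hi
        rw [one_mul, Measure.smul_apply, smul_eq_mul,
          Measure.restrict_apply (hψ k (measurableSet_singleton _))]
        exact hi) S
    have hsub : {x | τ < ⨆ q ∈ l, (rect φ₁ φ₂ q).indicator
        (fun _ => av μ f (rect φ₁ φ₂ q)) x} ⊆
        ⋃ k ∈ S, ψ k ⁻¹' {i | μ (ψ k ⁻¹' {i}) ≤ B * μ (ψ k ⁻¹' {i} ∩ U)} := by
      intro x hx
      simp only [Set.mem_ofPred_eq, lt_iSup_iff] at hx
      obtain ⟨q, hq, hx⟩ := hx
      by_cases hxq : x ∈ rect φ₁ φ₂ q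
      · rw [Set.indicator_of_mem hxq] at hx
        simp only [Set.mem_iUnion]
        refine ⟨q.2.2.1, hS q hq, ?_⟩
        simp only [Set.mem_preimage, Set.mem_ofPred_eq, hrect]
        exact hb q (Finset.mem_filter.2 ⟨hq, hx⟩) x hxq
      · rw [Set.indicator_of_notMem hxq] at hx
        exact absurd hx (by simp)
    have h1 : μ {x | τ < ⨆ q ∈ l, (rect φ₁ φ₂ q).indicator
        (fun _ => av μ f (rect φ₁ φ₂ q)) x} ≤ B * μ U := by
      refine (measure_mono hsub).trans ?_
      rw [one_mul] at key
      refine key.trans ((measure_mono (Set.subset_univ _)).trans ?_)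
      simp
    set V := {x | τ * (2 * B)⁻¹ < g x} with hV
    have hVm : MeasurableSet V := measurableSet_lt (by fun_prop) hgm
    have h2 : ∫⁻ x in U, g x ∂μ ≤ ∫⁻ x in V, g x ∂μ + τ * (2*B)⁻¹ * μ U := by
      calc ∫⁻ x in U, g x ∂μ ≤ ∫⁻ x in U, V.indicator g x + τ * (2*B)⁻¹ ∂μ := by
            refine lintegral_mono fun x => ?_
            by_cases hx : x ∈ V
            · simp [hx]
            · simp only [Set.indicator_of_notMem hx, zero_add]
              exact not_lt.1 hx
        _ = ∫⁻ x in U, V.indicator g x ∂μ + τ * (2*B)⁻¹ * μ U := by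
            rw [lintegral_add_right _ measurable_const, setLIntegral_const]
        _ ≤ _ := by
            gcongr 1
            rw [← lintegral_indicator hVm]
            exact setLIntegral_le_lintegral _ _
    have hBB : B * (2 * B)⁻¹ = 2⁻¹ := by
      rw [ENNReal.mul_inv (by simp) (by simp), mul_left_comm, ENNReal.mul_inv_cancel hB0 hBt, mul_one]
    have h3 : τ * μ U * 2⁻¹ + τ * μ U * 2⁻¹ ≤ B * ∫⁻ x in V, g x ∂μ + τ * μ U * 2⁻¹ := by
      rw [← mul_add, ENNReal.inv_two_add_inv_two, mul_one]
      refine hc.trans ((mul_le_mul_right h2 B).trans (le_of_eq ?_))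
      rw [mul_add]
      congr 1
      rw [← hBB]; ring
    have h4 := ENNReal.le_of_add_le_add_right (by finiteness) h3
    calc τ * _ ≤ τ * (B * μ U) := by gcongr
      _ = 2 * B * (τ * μ U * 2⁻¹) := by
        have : (2:ℝ≥0∞) * 2⁻¹ = 1 := ENNReal.mul_inv_cancel (by simp) (by simp)
        calc τ * (B * μ U) = (2 * 2⁻¹) * (τ * (B * μ U)) := by rw [this, one_mul]
          _ = _ := by ring
      _ ≤ 2 * B * (B * ∫⁻ x in V, g x ∂μ) := by gcongr
      _ = _ := by ring)
  rw [inv_inv] at hws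
  refine hws.trans ?_
  rw [mul_assoc _ _ (∫⁻ x, f x ^ s ∂μ)]
  gcongr

lemma full_bound {φ₁ : ℤ → X₁ → ι₁} {φ₂ : ℤ → X₂ → ι₂}
    (h₁ : ∀ k, Measurable (φ₁ k)) (h₂ : ∀ k, Measurable (φ₂ k))
    (r₁ : ∀ k k' x y, k ≤ k' → φ₁ k' x = φ₁ k' y → φ₁ k x = φ₁ k y)
    (r₂ : ∀ k k' x y, k ≤ k' → φ₂ k' x = φ₂ k' y → φ₂ k x = φ₂ k y)
    (μ : Measure (X₁ × X₂)) [SFinite μ] (hfin : ∀ q, μ (rect φ₁ φ₂ q) ≠ ⊤)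
    (ν : Measure X₂) (B : ℝ≥0∞) (hB0 : B ≠ 0) (hBt : B ≠ ⊤)
    (hD : ∀ q : ℤ × ι₁ × ℤ × ι₂, ∀ F : Set X₂, MeasurableSet F → F ⊆ φ₂ q.2.2.1 ⁻¹' {q.2.2.2} →
      ν (φ₂ q.2.2.1 ⁻¹' {q.2.2.2}) ≤ 2 * ν F →
      μ (rect φ₁ φ₂ q) ≤ B * μ ((φ₁ q.1 ⁻¹' {q.2.1}) ×ˢ F))
    (f : X₁ × X₂ → ℝ≥0∞) (hf : Measurable f) (s : ℝ) (hs : 1 < s) :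
    ∫⁻ x, (⨆ q, (rect φ₁ φ₂ q).indicator (fun _ => av μ f (rect φ₁ φ₂ q)) x) ^ s ∂μ ≤
      (ENNReal.ofReal (s / (s-1)) * (2 * B ^ 2) * (2 * B) ^ (s-1)) *
      (ENNReal.ofReal (s / (s-1)) * 2 * 2 ^ (s-1)) * ∫⁻ x, f x ^ s ∂μ := by
  have hs0 : 0 < s := by linarith
  have e : ∀ x, (⨆ q, (rect φ₁ φ₂ q).indicator (fun _ => av μ f (rect φ₁ φ₂ q)) x) ^ s =
      ⨆ l : Finset (ℤ × ι₁ × ℤ × ι₂),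
        (⨆ q ∈ l, (rect φ₁ φ₂ q).indicator (fun _ => av μ f (rect φ₁ φ₂ q)) x) ^ s := by
    intro x
    rw [iSup_eq_iSup_finset]
    exact (ENNReal.orderIsoRpow s hs0).map_iSup _
  simp_rw [e]
  rw [lintegral_iSup_directed]
  · exact iSup_le fun l => finite_bound h₁ h₂ r₁ r₂ μ hfin ν B hB0 hBt hD f hf s hs l
  · intro l
    exact ((finsup_meas _ _ fun q _ =>
      measurable_const.indicator (rect_meas h₁ h₂ q)).pow_const s).aemeasurable
  · classical
    refine Monotone.directed_le ?_
    intro l l' hl x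
    refine ENNReal.rpow_le_rpow ?_ hs0.le
    exact biSup_mono fun q hq => hl hq

end Abstract

end Feff

namespace Feff

/-- the floor map at scale `k` -/
noncomputable def fl {d : ℕ} (k : ℤ) (x : Fin d → ℝ) : Fin d → ℤ := fun i => ⌊(2:ℝ) ^ k * x i⌋

lemma fl_meas {d : ℕ} (k : ℤ) : Measurable (fl (d := d) k) :=
  measurable_pi_lambda _ fun i => Int.measurable_floor.comp
    (measurable_const.mul (measurable_pi_apply i))

lemma fl_ref {d : ℕ} (k k' : ℤ) (x y : Fin d → ℝ) (hk : k ≤ k') (h : fl k' x = fl k' y) :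
    fl k x = fl k y := by
  obtain ⟨n, rfl⟩ := Int.le.dest hk
  funext i
  have hi : ⌊(2:ℝ) ^ (k + n) * x i⌋ = ⌊(2:ℝ) ^ (k + n) * y i⌋ := congrFun h i
  have key : ∀ (z : ℝ) (m : ℤ), m ≤ ⌊(2:ℝ) ^ k * z⌋ ↔ 2 ^ n * m ≤ ⌊(2:ℝ) ^ (k + n) * z⌋ := by
    intro z m
    rw [Int.le_floor, Int.le_floor, zpow_add₀ two_ne_zero, zpow_natCast]
    push_cast
    have : (2:ℝ) ^ k * 2 ^ n * z = 2 ^ n * (2 ^ k * z) := by ring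
    rw [this, mul_le_mul_iff_right₀ (by positivity)]
  change ⌊(2:ℝ) ^ k * x i⌋ = ⌊(2:ℝ) ^ k * y i⌋
  apply le_antisymm
  · rw [key, ← hi, ← key]
  · rw [key, hi, ← key]

lemma fl_preimage {d : ℕ} (k : ℤ) (m : Fin d → ℤ) :
    fl k ⁻¹' {m} = Set.univ.pi fun i =>
      Set.Ico ((2:ℝ) ^ (-k) * m i) ((2:ℝ) ^ (-k) * (m i + 1)) := by
  ext x
  simp only [Set.mem_preimage, Set.mem_singleton_iff, Set.mem_pi, Set.mem_univ, true_imp_iff,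
    funext_iff, fl]
  refine forall_congr' fun i => ?_
  have h2 : (0:ℝ) < 2 ^ k := by positivity
  rw [Int.floor_eq_iff, zpow_neg, Set.mem_Ico, inv_mul_le_iff₀ h2, lt_inv_mul_iff₀ h2]

lemma fl_cube {d : ℕ} (k : ℤ) (m : Fin d → ℤ) :
    fl k ⁻¹' {m} = cubeOf (fun i => (2:ℝ) ^ (-k) * m i) ((2:ℝ) ^ (-k)) := by
  rw [fl_preimage, cubeOf]
  congr 1; funext i; congr 1; ring

lemma cube_vol {d : ℕ} (a : Fin d → ℝ) (h : ℝ) (hh : 0 < h) :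
    volume (cubeOf a h) ≠ 0 ∧ volume (cubeOf a h) ≠ ⊤ := by
  unfold cubeOf
  rw [volume_pi_pi]
  simp [Real.volume_Ico, hh]

section

variable {d₁ d₂ : ℕ}

lemma fl_isRect (q : ℤ × (Fin d₁ → ℤ) × ℤ × (Fin d₂ → ℤ)) : IsRect (rect fl fl q) :=
  ⟨_, _, ⟨_, _, by positivity, fl_cube _ _⟩, ⟨_, _, by positivity, fl_cube _ _⟩, rfl⟩

lemma fl_vol (q : ℤ × (Fin d₁ → ℤ) × ℤ × (Fin d₂ → ℤ)) :
    volume (rect (fl (d := d₁)) (fl (d := d₂)) q) ≠ 0 ∧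
    volume (rect (fl (d := d₁)) (fl (d := d₂)) q) ≠ ⊤ := by
  have h1 := cube_vol (fun i => (2:ℝ) ^ (-q.1) * q.2.1 i) ((2:ℝ) ^ (-q.1)) (by positivity)
  have h2 := cube_vol (fun i => (2:ℝ) ^ (-q.2.2.1) * q.2.2.2 i) ((2:ℝ) ^ (-q.2.2.1)) (by positivity)
  unfold rect
  rw [fl_cube, fl_cube, Measure.volume_eq_prod, Measure.prod_prod]
  exact ⟨mul_ne_zero h1.1 h2.1, ENNReal.mul_ne_top h1.2 h2.2⟩

lemma holder (p : ℝ) (hp : 1 < p) (lam : Pt d₁ d₂ → ℝ) (hm : Measurable lam) (hpos : ∀ᵐ x ∂(volume : Measure (Pt d₁ d₂)), 0 < lam x)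
    (F : Set (Pt d₁ d₂)) :
    volume F ^ p ≤ (∫⁻ x in F, ENNReal.ofReal (lam x)) *
      (∫⁻ x in F, ENNReal.ofReal (lam x ^ (-(1/(p-1))))) ^ (p-1) := by
  have hp0 : 0 < p := by linarith
  have hp1 : 0 < p - 1 := by linarith
  have hc := Real.HolderConjugate.conjExponent hp
  have hH := ENNReal.lintegral_mul_le_Lp_mul_Lq (volume.restrict F) hc
    (f := fun x => ENNReal.ofReal (lam x) ^ (1/p)) (g := fun x => ENNReal.ofReal (lam x) ^ (-(1/p)))
    (by fun_prop) (by fun_prop)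
  have hpos' : ∀ᵐ x ∂(volume.restrict F), 0 < lam x := ae_restrict_of_ae hpos
  have e1 : ∫⁻ x in F, ((fun x => ENNReal.ofReal (lam x) ^ (1/p)) *
      (fun x => ENNReal.ofReal (lam x) ^ (-(1/p)))) x = volume F := by
    rw [← setLIntegral_one]
    refine lintegral_congr_ae ?_
    filter_upwards [hpos'] with x hx
    simp only [Pi.mul_apply]
    rw [← ENNReal.rpow_add _ _ (by simpa using hx) (by simp), add_neg_cancel, ENNReal.rpow_zero]
  have e2 : ∫⁻ x in F, (ENNReal.ofReal (lam x) ^ (1/p)) ^ p =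
      ∫⁻ x in F, ENNReal.ofReal (lam x) := by
    refine lintegral_congr fun x => ?_
    rw [← ENNReal.rpow_mul, one_div, inv_mul_cancel₀ hp0.ne', ENNReal.rpow_one]
  have e3 : ∫⁻ x in F, (ENNReal.ofReal (lam x) ^ (-(1/p))) ^ (Real.conjExponent p) =
      ∫⁻ x in F, ENNReal.ofReal (lam x ^ (-(1/(p-1)))) := by
    refine lintegral_congr_ae ?_
    filter_upwards [hpos'] with x hx
    rw [← ENNReal.rpow_mul, ENNReal.ofReal_rpow_of_pos hx, Real.conjExponent]
    congr 3
    field_simp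
  rw [e1, e2, e3] at hH
  have h4 := ENNReal.rpow_le_rpow hH hp0.le
  refine h4.trans (le_of_eq ?_)
  rw [ENNReal.mul_rpow_of_nonneg _ _ hp0.le, ← ENNReal.rpow_mul, ← ENNReal.rpow_mul,
    one_div, inv_mul_cancel₀ hp0.ne', ENNReal.rpow_one, Real.conjExponent]
  congr 2
  field_simp

lemma pos_int (lam : Pt d₁ d₂ → ℝ) (hpos : ∀ᵐ x ∂(volume : Measure (Pt d₁ d₂)), 0 < lam x)
    (g : Pt d₁ d₂ → ℝ) (hg : Measurable g) (hgp : ∀ x, 0 < lam x → 0 < g x)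
    (F : Set (Pt d₁ d₂)) (hF : volume F ≠ 0) : ∫⁻ x in F, ENNReal.ofReal (g x) ≠ 0 := by
  intro h
  rw [lintegral_eq_zero_iff (by fun_prop)] at h
  have hpos' : ∀ᵐ x ∂(volume.restrict F), 0 < lam x := ae_restrict_of_ae hpos
  have : ∀ᵐ x ∂(volume.restrict F), False := by
    filter_upwards [h, hpos'] with x hx hx'
    have := hgp x hx'
    simp at hx
    linarith
  simp at this
  exact hF this

lemma Ar_le (p : ℝ) (hp : 1 < p) (lam : Pt d₁ d₂ → ℝ)
    (q : ℤ × (Fin d₁ → ℤ) × ℤ × (Fin d₂ → ℤ)) :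
    (∫⁻ x in rect fl fl q, ENNReal.ofReal (lam x)) *
      (∫⁻ x in rect fl fl q, ENNReal.ofReal (lam x ^ (-(1/(p-1))))) ^ (p-1) ≤
      ArRect (ENNReal.ofReal p) lam * volume (rect (fl (d := d₁)) (fl (d := d₂)) q) ^ p := by
  have hp0 : 0 < p := by linarith
  have hp1 : 0 < p - 1 := by linarith
  have h : ArRatio (ENNReal.ofReal p) (rect fl fl q) lam ≤ ArRect (ENNReal.ofReal p) lam :=
    le_iSup₂_of_le (rect fl fl q) (fl_isRect q) le_rfl
  obtain ⟨hv0, hvt⟩ := fl_vol q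
  set v := volume (rect (fl (d := d₁)) (fl (d := d₂)) q)
  have hne : ENNReal.ofReal p ≠ 1 := by
    rw [Ne, ENNReal.ofReal_eq_one]; exact hp.ne'
  rw [ArRatio, if_neg hne, ENNReal.toReal_ofReal hp0.le, avgE, avgE] at h
  have e : v ^ p = v * v ^ (p-1) := by
    nth_rw 2 [← ENNReal.rpow_one v]
    rw [← ENNReal.rpow_add _ _ hv0 hvt]; congr 1; ring
  refine le_trans (le_of_eq ?_) (mul_le_mul_left h (v ^ p))
  rw [e, ENNReal.div_rpow_of_nonneg _ _ hp1.le]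
  rw [mul_mul_mul_comm, ENNReal.div_mul_cancel hv0 hvt, ENNReal.div_mul_cancel]
  · exact (ENNReal.rpow_pos (pos_iff_ne_zero.2 hv0) hvt).ne'
  · exact ENNReal.rpow_ne_top_of_nonneg hp1.le hvt

lemma facts (p : ℝ) (hp : 1 < p) (lam : Pt d₁ d₂ → ℝ) (hm : Measurable lam) (hpos : ∀ᵐ x ∂(volume : Measure (Pt d₁ d₂)), 0 < lam x)
    (hA : ArRect (ENNReal.ofReal p) lam < ∞)
    (q : ℤ × (Fin d₁ → ℤ) × ℤ × (Fin d₂ → ℤ)) :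
    (∫⁻ x in rect fl fl q, ENNReal.ofReal (lam x)) ≠ ⊤ ∧
    (∫⁻ x in rect fl fl q, ENNReal.ofReal (lam x ^ (-(1/(p-1))))) ^ (p-1) ≠ 0 ∧
    (∫⁻ x in rect fl fl q, ENNReal.ofReal (lam x ^ (-(1/(p-1))))) ^ (p-1) ≠ ⊤ ∧
    ArRect (ENNReal.ofReal p) lam ≠ 0 := by
  have hp0 : 0 < p := by linarith
  have hp1 : 0 < p - 1 := by linarith
  have h := Ar_le p hp lam q
  obtain ⟨hv0, hvt⟩ := fl_vol q
  have hμ := pos_int lam hpos lam hm (fun _ h => h) _ hv0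
  have hσ := pos_int lam hpos (fun x => lam x ^ (-(1/(p-1)))) (by fun_prop)
    (fun x h => Real.rpow_pos_of_pos h _) _ hv0
  have hσ' : (∫⁻ x in rect fl fl q, ENNReal.ofReal (lam x ^ (-(1/(p-1))))) ^ (p-1) ≠ 0 := by
    rw [Ne, ENNReal.rpow_eq_zero_iff_of_pos hp1]; exact hσ
  have hR : ArRect (ENNReal.ofReal p) lam *
      volume (rect (fl (d := d₁)) (fl (d := d₂)) q) ^ p ≠ ⊤ :=
    ENNReal.mul_ne_top hA.ne (ENNReal.rpow_ne_top_of_nonneg hp0.le hvt)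
  have hL := (h.trans_lt hR.lt_top).ne
  refine ⟨fun h0 => hL ?_, hσ', fun h0 => hL ?_, fun h0 => ?_⟩
  · rw [h0, ENNReal.top_mul hσ']
  · rw [h0, ENNReal.mul_top hμ]
  · rw [h0, zero_mul, nonpos_iff_eq_zero, mul_eq_zero] at h
    exact h.elim hμ hσ'

lemma doubling (p : ℝ) (hp : 1 < p) (lam : Pt d₁ d₂ → ℝ) (hm : Measurable lam) (hpos : ∀ᵐ x ∂(volume : Measure (Pt d₁ d₂)), 0 < lam x)
    (hA : ArRect (ENNReal.ofReal p) lam < ∞)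
    (q : ℤ × (Fin d₁ → ℤ) × ℤ × (Fin d₂ → ℤ)) (F : Set (Fin d₂ → ℝ))
    (hFs : F ⊆ fl q.2.2.1 ⁻¹' {q.2.2.2})
    (hv : volume (fl (d := d₂) q.2.2.1 ⁻¹' {q.2.2.2}) ≤ 2 * volume F) :
    (∫⁻ x in rect fl fl q, ENNReal.ofReal (lam x)) ≤
      (2 ^ p * ArRect (ENNReal.ofReal p) lam) *
        ∫⁻ x in (fl q.1 ⁻¹' {q.2.1}) ×ˢ F, ENNReal.ofReal (lam x) := by
  have hp0 : 0 < p := by linarith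
  have hp1 : 0 < p - 1 := by linarith
  obtain ⟨-, hs0, hst, -⟩ := facts p hp lam hm hpos hA q
  have h := Ar_le p hp lam q
  set Q := rect (fl (d := d₁)) (fl (d := d₂)) q with hQ
  set E := (fl (d := d₁) q.1 ⁻¹' {q.2.1}) ×ˢ F with hE
  have hEQ : E ⊆ Q := Set.prod_mono subset_rfl hFs
  have hvol : volume Q ≤ 2 * volume E := by
    rw [hQ, hE, rect, Measure.volume_eq_prod, Measure.prod_prod, Measure.prod_prod, mul_left_comm]
    gcongr
  have hH := holder p hp lam hm hpos E
  refine (ENNReal.mul_le_mul_iff_left hs0 hst).1 (h.trans ?_)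
  calc _ ≤ ArRect (ENNReal.ofReal p) lam * (2 * volume E) ^ p := by gcongr
    _ = (2 ^ p * ArRect (ENNReal.ofReal p) lam) * volume E ^ p := by
      rw [ENNReal.mul_rpow_of_nonneg _ _ hp0.le]; ring
    _ ≤ (2 ^ p * ArRect (ENNReal.ofReal p) lam) * ((∫⁻ x in E, ENNReal.ofReal (lam x)) *
      (∫⁻ x in Q, ENNReal.ofReal (lam x ^ (-(1/(p-1))))) ^ (p-1)) := by
      gcongr
      exact hH.trans (by gcongr)
    _ = _ := by ring

end

end Feff

/-- Fefferman's weighted maximal function bound.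
For `p, s ∈ (1,∞)` there is `C` depending only on `s`, `p` and the dimensions such that
for every bi-parameter `A_p` weight `λ`:
`‖M^λ_𝒟 f‖_{L^s(λ)} ≤ C [λ]_{A_p}^{1+1/s} ‖f‖_{L^s(λ)}`. -/
theorem statement11 (d₁ d₂ : ℕ) (p s : ℝ) (hp : 1 < p) (hs : 1 < s) :
    ∃ C : ℝ≥0∞, C < ∞ ∧
      ∀ lam : Pt d₁ d₂ → ℝ, Measurable lam →
        (∀ᵐ x ∂(volume : Measure (Pt d₁ d₂)), 0 < lam x) →
        ArRect (ENNReal.ofReal p) lam < ∞ →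
        ∀ f : Pt d₁ d₂ → ℝ, Measurable f →
          eNormW (MDw lam f) s lam
            ≤ C * ArRect (ENNReal.ofReal p) lam ^ (1 + 1 / s) *
                eNormW (fun x => ENNReal.ofReal |f x|) s lam := by
  have hs0 : 0 < s := by linarith
  have hs1 : 0 < s - 1 := by linarith
  have hp0 : 0 < p := by linarith
  set c₀ : ℝ≥0∞ := (ENNReal.ofReal (s / (s-1)) * 2 * 2 ^ (s-1)) *
      (ENNReal.ofReal (s / (s-1)) * 2 * 2 ^ (s-1)) with hc₀
  have h2t : (2:ℝ≥0∞) ^ (s-1) ≠ ⊤ := ENNReal.rpow_ne_top_of_nonneg hs1.le (by simp)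
  have hc₀t : c₀ ≠ ⊤ := by
    have : ENNReal.ofReal (s / (s-1)) * 2 * 2 ^ (s-1) ≠ ⊤ :=
      ENNReal.mul_ne_top (ENNReal.mul_ne_top (by simp) (by simp)) h2t
    exact ENNReal.mul_ne_top this this
  have h2p : (2:ℝ≥0∞) ^ p ≠ ⊤ := ENNReal.rpow_ne_top_of_nonneg hp0.le (by simp)
  refine ⟨c₀ ^ (1/s) * (2 ^ p) ^ (1 + 1/s), ?_, ?_⟩
  · exact (ENNReal.mul_ne_top (ENNReal.rpow_ne_top_of_nonneg (by positivity) hc₀t)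
      (ENNReal.rpow_ne_top_of_nonneg (by positivity) h2p)).lt_top
  intro lam hm hpos hA f hf
  set A := ArRect (ENNReal.ofReal p) lam with hAdef
  set μ : Measure (Pt d₁ d₂) := volume.withDensity (fun x => ENNReal.ofReal (lam x)) with hμ
  have hlm : Measurable (fun x => ENNReal.ofReal (lam x)) := by fun_prop
  set F : Pt d₁ d₂ → ℝ≥0∞ := fun x => ENNReal.ofReal |f x| with hF
  have hFm : Measurable F := by
    have := hf.norm
    simp only [Real.norm_eq_abs] at this
    exact this.ennreal_ofReal
  set B : ℝ≥0∞ := 2 ^ p * A with hB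
  have hrm : ∀ q, MeasurableSet (Feff.rect (Feff.fl (d := d₁)) (Feff.fl (d := d₂)) q) :=
    fun q => Feff.rect_meas Feff.fl_meas Feff.fl_meas q
  have hμr : ∀ q, μ (Feff.rect Feff.fl Feff.fl q) =
      ∫⁻ x in Feff.rect Feff.fl Feff.fl q, ENNReal.ofReal (lam x) :=
    fun q => withDensity_apply _ (hrm q)
  have hA0 : A ≠ 0 := (Feff.facts p hp lam hm hpos hA (0, 0, 0, 0)).2.2.2
  have hB0 : B ≠ 0 := mul_ne_zero
    (ENNReal.rpow_pos (by simp) (by simp)).ne' hA0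
  have hBt : B ≠ ⊤ := ENNReal.mul_ne_top h2p hA.ne
  have main := Feff.full_bound (φ₁ := Feff.fl (d := d₁)) (φ₂ := Feff.fl (d := d₂))
    Feff.fl_meas Feff.fl_meas Feff.fl_ref Feff.fl_ref μ
    (fun q => by rw [hμr]; exact (Feff.facts p hp lam hm hpos hA q).1) volume B hB0 hBt
    (fun q E hEm hEs hv => by
      rw [hμr, hμ, withDensity_apply _
        ((Feff.fl_meas _ (measurableSet_singleton _)).prod hEm)]
      exact Feff.doubling p hp lam hm hpos hA q E hEs hv) F hFm s hs
  set G : Pt d₁ d₂ → ℝ≥0∞ := fun x => ⨆ q, (Feff.rect Feff.fl Feff.fl q).indicator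
    (fun _ => Feff.av μ F (Feff.rect Feff.fl Feff.fl q)) x with hG
  have hGm : Measurable G := Measurable.iSup fun q => measurable_const.indicator (hrm q)
  have hMG : ∀ x, MDw lam f x ≤ G x := by
    intro x
    refine iSup_le fun R => iSup_le fun hR => iSup_le fun hx => ?_
    obtain ⟨I₁, I₂, ⟨k₁, m₁, rfl⟩, ⟨k₂, m₂, rfl⟩, rfl⟩ := hR
    rw [← Feff.fl_preimage, ← Feff.fl_preimage] at hx ⊢
    refine le_iSup_of_le (k₁, m₁, k₂, m₂) ?_
    have e : (Feff.fl k₁ ⁻¹' {m₁}) ×ˢ (Feff.fl k₂ ⁻¹' {m₂}) =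
      Feff.rect (Feff.fl (d := d₁)) (Feff.fl (d := d₂)) (k₁, m₁, k₂, m₂) := rfl
    rw [e] at hx ⊢
    rw [Set.indicator_of_mem hx, Feff.av, hμr, hμ,
      setLIntegral_withDensity_eq_setLIntegral_mul _ hlm hFm (hrm _)]
    refine le_of_eq ?_
    congr 1
    refine lintegral_congr fun y => ?_
    rw [ENNReal.ofReal_mul (abs_nonneg _), Pi.mul_apply, mul_comm]
  have hint : ∀ H : Pt d₁ d₂ → ℝ≥0∞, Measurable H →
      ∫⁻ x, H x ^ s ∂μ = ∫⁻ x, H x ^ s * ENNReal.ofReal (lam x) := by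
    intro H hH
    rw [hμ, lintegral_withDensity_eq_lintegral_mul _ hlm (hH.pow_const s)]
    refine lintegral_congr fun y => ?_
    rw [Pi.mul_apply, mul_comm]
  change ∫⁻ x, G x ^ s ∂μ ≤ _ at main
  rw [hint G hGm, hint F hFm] at main
  have hconst : (ENNReal.ofReal (s / (s-1)) * (2 * B ^ 2) * (2 * B) ^ (s-1)) *
      (ENNReal.ofReal (s / (s-1)) * 2 * 2 ^ (s-1)) = c₀ * B ^ (s + 1) := by
    have : B ^ (s+1) = B ^ 2 * B ^ (s-1) := by
      rw [← ENNReal.rpow_two, ← ENNReal.rpow_add _ _ hB0 hBt]; congr 1; ring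
    rw [this, hc₀, ENNReal.mul_rpow_of_nonneg _ _ hs1.le]; ring
  rw [hconst] at main
  unfold eNormW
  clear_value c₀
  calc (∫⁻ x, MDw lam f x ^ s * ENNReal.ofReal (lam x)) ^ (1/s)
      ≤ (c₀ * B ^ (s+1) * ∫⁻ x, F x ^ s * ENNReal.ofReal (lam x)) ^ (1/s) := by
        refine ENNReal.rpow_le_rpow (le_trans (lintegral_mono fun x => ?_) main) (by positivity)
        gcongr
        exact hMG x
    _ = _ := by
        have hss : 0 ≤ 1 / s := by positivity
        rw [ENNReal.mul_rpow_of_nonneg _ _ hss, ENNReal.mul_rpow_of_nonneg _ _ hss,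
          ← ENNReal.rpow_mul]
        have : (s+1) * (1/s) = 1 + 1/s := by field_simp
        rw [this, hB, ENNReal.mul_rpow_of_nonneg _ _ (by positivity)]
        ring
end

section
/- Reduction of the multilinear class to a weighted linear class: Let $1\le p_1,\ldots,p_n\le\infty$ with $1/p=\sum_{i=1}^n 1/p_i$, and let $w_1,\ldots,w_n$ be weights on $\mathbb{R}^{d_1}\times\mathbb{R}^{d_2}$. Let $\rho=(1+\sum_{i=1}^{n-1}1/p_i)^{-1}$ and suppose $w_i^{1/(n-1+1/p_i)}\in A_{n/(n-1+1/p_i)}$ for $1\le i\le n-1$ and $\widehat w:=(\prod_{i=1}^{n-1}w_i)^{\rho}\in A_{n\rho}$. Then $(w_1,\ldots,w_n)\in A_{\vec p}$ if and only if $W:=w_n\,\widehat w^{1/p_n'}\in A_{p_n,p}(\widehat w)$. -/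
open MeasureTheory ENNReal
open scoped Classical

noncomputable section

namespace S14

section gen
variable {X : Type*} [MeasureSpace X]

/-- normalized restriction of the volume to `R`. -/
def nu (R : Set X) : Measure X := (volume R)⁻¹ • volume.restrict R

lemma nu_ae {R : Set X} {P : X → Prop} (h : ∀ᵐ x ∂(volume : Measure X), P x) :
    ∀ᵐ x ∂(nu R), P x :=
  Measure.ae_smul_measure (ae_restrict_of_ae h) _

lemma nu_univ {R : Set X} (h0 : volume R ≠ 0) (h1 : volume R ≠ ∞) : nu R Set.univ = 1 := by
  simp [nu, ENNReal.inv_mul_cancel h0 h1]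

lemma avgE_eq (R : Set X) (f : X → ℝ) : avgE R f = ∫⁻ x, ENNReal.ofReal (f x) ∂(nu R) := by
  rw [nu, lintegral_smul_measure, avgE, div_eq_mul_inv, mul_comm]; rfl

lemma essSupE_eq {R : Set X} (h1 : volume R ≠ ∞) (f : X → ℝ) :
    essSupE R f = essSup (fun x => ENNReal.ofReal (f x)) (nu R) := by
  rw [nu, essSup_ennreal_smul_measure (by simpa using h1), essSupE]

lemma essSupE_pos {R : Set X} (h1 : volume R ≠ ∞) {f : X → ℝ} (hf : ∀ᵐ x, 0 < f x) :
    essSupE R f = eLpNorm f ∞ (nu R) := by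
  rw [essSupE_eq h1, eLpNorm_exponent_top, eLpNormEssSup]
  apply essSup_congr_ae
  filter_upwards [nu_ae hf] with x hx
  rw [Real.enorm_eq_ofReal hx.le]

lemma avgE_rpow {R : Set X} {f : X → ℝ} (hf : ∀ᵐ x, 0 < f x) {t : ℝ≥0∞} (h0 : t ≠ 0)
    (h1 : t ≠ ∞) : avgE R (fun x => f x ^ t.toReal) = eLpNorm f t (nu R) ^ t.toReal := by
  have ht := ENNReal.toReal_pos h0 h1
  rw [eLpNorm_eq_lintegral_rpow_enorm_toReal h0 h1, ← ENNReal.rpow_mul, avgE_eq]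
  rw [one_div_mul_cancel ht.ne', ENNReal.rpow_one]
  apply lintegral_congr_ae
  filter_upwards [nu_ae hf] with x hx
  rw [Real.enorm_eq_ofReal hx.le, ENNReal.ofReal_rpow_of_pos hx]

lemma avgE_congr {R : Set X} {f g : X → ℝ} (h : ∀ᵐ x, f x = g x) : avgE R f = avgE R g := by
  rw [avgE_eq, avgE_eq]
  apply lintegral_congr_ae
  filter_upwards [nu_ae h] with x hx
  rw [hx]

lemma essSupE_congr {R : Set X} {f g : X → ℝ} (h : ∀ᵐ x, f x = g x) :
    essSupE R f = essSupE R g := by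
  apply essSup_congr_ae
  filter_upwards [ae_restrict_of_ae h] with x hx
  rw [hx]

lemma mainFactor_eq {R : Set X} (hR : volume R ≠ ∞) {f : X → ℝ} (hf : ∀ᵐ x, 0 < f x)
    {p : ℝ≥0∞} (h0 : p ≠ 0) : mainFactor R f p = eLpNorm f p (nu R) := by
  unfold mainFactor
  split_ifs with h
  · rw [h, essSupE_pos hR hf]
  · rw [avgE_rpow hf h0 h, ← ENNReal.rpow_mul,
      mul_one_div_cancel (ENNReal.toReal_pos h0 h).ne', ENNReal.rpow_one]

lemma inv_add_dualExp {p : ℝ≥0∞} (hp : 1 ≤ p) : p⁻¹ + (dualExp p)⁻¹ = 1 := by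
  unfold dualExp
  split_ifs with h1 h2
  · simp [h1]
  · simp [h2]
  · lift p to NNReal using h2
    have hp1 : (1:ℝ) < p := by
      have : (1 : ℝ≥0∞) < p := lt_of_le_of_ne hp (Ne.symm h1)
      exact_mod_cast this
    have e : (p : ℝ≥0∞) = ENNReal.ofReal p := by simp
    have hpos : (0:ℝ) < p / (p - 1) := div_pos (by linarith) (by linarith)
    simp only [coe_toReal]
    rw [e, ← ENNReal.ofReal_inv_of_pos (by linarith), ← ENNReal.ofReal_inv_of_pos hpos,
      ← ENNReal.ofReal_add (by positivity) (by positivity)]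
    have : (p:ℝ)⁻¹ + ((p:ℝ) / (p - 1))⁻¹ = 1 := by
      have : (p:ℝ) ≠ 0 := by linarith
      field_simp
      ring
    rw [this]; simp

lemma dualExp_ne_zero {p : ℝ≥0∞} (hp : 1 ≤ p) : dualExp p ≠ 0 := by
  intro h
  have := inv_add_dualExp hp
  simp [h] at this

lemma dualExp_eq_top {p : ℝ≥0∞} (hp : 1 ≤ p) : dualExp p = ∞ ↔ p = 1 := by
  constructor
  · intro h
    have := inv_add_dualExp hp
    simpa [h] using this
  · intro h; simp [dualExp, h]

lemma inv_pos_ae {f : X → ℝ} (hf : ∀ᵐ x, 0 < f x) : ∀ᵐ x, 0 < (f x)⁻¹ := by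
  filter_upwards [hf] with x hx
  positivity

lemma dualFactor_eq {R : Set X} (hR : volume R ≠ ∞) {f : X → ℝ} (hf : ∀ᵐ x, 0 < f x)
    {p : ℝ≥0∞} (hp : 1 ≤ p) :
    dualFactor R f p = eLpNorm (fun x => (f x)⁻¹) (dualExp p) (nu R) := by
  have h0 := dualExp_ne_zero hp
  unfold dualFactor
  split_ifs with h
  · rw [(dualExp_eq_top hp).2 h, essSupE_pos hR (inv_pos_ae hf)]
  · have h1 : dualExp p ≠ ∞ := fun h' => h ((dualExp_eq_top hp).1 h')
    have : avgE R (fun x => f x ^ (-(dualExp p).toReal))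
        = avgE R (fun x => ((f x)⁻¹) ^ ((dualExp p).toReal)) := by
      apply avgE_congr
      filter_upwards [hf] with x hx
      rw [Real.rpow_neg hx.le, Real.inv_rpow hx.le]
    rw [this, avgE_rpow (inv_pos_ae hf) h0 h1, ← ENNReal.rpow_mul,
      mul_one_div_cancel (ENNReal.toReal_pos h0 h1).ne', ENNReal.rpow_one]

lemma essSup_rpow {μ : Measure X} (g : X → ℝ≥0∞) {t : ℝ} (ht : 0 < t) :
    essSup (fun x => g x ^ t) μ = (essSup g μ) ^ t := by
  have := (ENNReal.orderIsoRpow t ht).essSup_apply g μ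
  simpa [ENNReal.orderIsoRpow_apply] using this.symm

lemma ArRatio_eq {R : Set X} (hR : volume R ≠ ∞) {f : X → ℝ} (hf : ∀ᵐ x, 0 < f x)
    {θ b r : ℝ≥0∞} (h0 : θ ≠ 0) (h1 : θ ≠ ∞) (hb : b ≠ ∞) (hr : r = 1 + θ * b) :
    ArRatio r R (fun x => f x ^ θ.toReal)
      = (eLpNorm f θ (nu R) * eLpNorm (fun x => (f x)⁻¹) b⁻¹ (nu R)) ^ θ.toReal := by
  have ht := ENNReal.toReal_pos h0 h1
  rw [ENNReal.mul_rpow_of_nonneg _ _ ht.le, ← avgE_rpow hf h0 h1]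
  unfold ArRatio
  by_cases hb0 : b = 0
  · have : r = 1 := by simp [hr, hb0]
    rw [if_pos this, hb0, ENNReal.inv_zero]
    congr 1
    rw [← essSupE_pos hR (inv_pos_ae hf), essSupE_eq hR, essSupE_eq hR, ← essSup_rpow _ ht]
    apply essSup_congr_ae
    filter_upwards [nu_ae hf] with x hx
    rw [ENNReal.ofReal_rpow_of_pos (by positivity), Real.inv_rpow hx.le]
  · have hb' := ENNReal.toReal_pos hb0 hb
    have hr1 : r ≠ 1 := by
      intro h
      rw [hr] at h
      have h2 : θ * b = 0 := (ENNReal.add_right_inj (a := 1) (by simp)).1 (by simpa using h)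
      simp [h0, hb0] at h2
    have hrr : r.toReal - 1 = θ.toReal * b.toReal := by
      rw [hr, ENNReal.toReal_add (by simp) (ENNReal.mul_ne_top h1 hb), ENNReal.toReal_mul]
      simp
    rw [if_neg hr1, hrr]
    congr 1
    have : avgE R (fun x => (f x ^ θ.toReal) ^ (-(1 / (θ.toReal * b.toReal))))
        = avgE R (fun x => ((f x)⁻¹) ^ ((b⁻¹).toReal)) := by
      apply avgE_congr
      filter_upwards [hf] with x hx
      rw [← Real.rpow_mul hx.le, Real.inv_rpow hx.le, ← Real.rpow_neg hx.le,
        ENNReal.toReal_inv]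
      congr 1
      field_simp
    rw [this, avgE_rpow (inv_pos_ae hf) (by simpa using hb) (by simpa using hb0),
      ← ENNReal.rpow_mul, ENNReal.toReal_inv]
    congr 1
    field_simp

lemma holder_two {μ : Measure X} {f g : X → ℝ} (hf : Measurable f) (hg : Measurable g)
    (a b : ℝ≥0∞) :
    eLpNorm (fun x => f x * g x) (a + b)⁻¹ μ ≤ eLpNorm f a⁻¹ μ * eLpNorm g b⁻¹ μ := by
  have : ENNReal.HolderTriple a⁻¹ b⁻¹ (a + b)⁻¹ := ⟨by simp⟩
  have h := eLpNorm_le_eLpNorm_mul_eLpNorm_of_nnnorm (μ := μ) (p := a⁻¹) (q := b⁻¹)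
    (r := (a + b)⁻¹) hf.aestronglyMeasurable hg.aestronglyMeasurable
    (fun s t : ℝ => s * t) 1 (.of_forall fun x => by simp)
  simpa using h

lemma holder_prod {R : Set X} (h0 : volume R ≠ 0) (h1 : volume R ≠ ∞) {ι : Type*}
    (s : Finset ι) (f : ι → X → ℝ) (hf : ∀ i, Measurable (f i)) (a : ι → ℝ≥0∞) :
    eLpNorm (fun x => ∏ i ∈ s, f i x) (∑ i ∈ s, a i)⁻¹ (nu R)
      ≤ ∏ i ∈ s, eLpNorm (f i) (a i)⁻¹ (nu R) := by
  classical
  induction s using Finset.induction_on with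
  | empty =>
    simp only [Finset.prod_empty, Finset.sum_empty, ENNReal.inv_zero]
    have hne : nu R ≠ 0 := fun h => by simpa [h] using nu_univ h0 h1
    rw [eLpNorm_const _ (by simp) hne]
    simp
  | insert i s hi ih =>
    simp only [Finset.prod_insert hi, Finset.sum_insert hi]
    refine (holder_two (hf i) (Finset.measurable_fun_prod _ fun j _ => hf j) _ _).trans ?_
    gcongr

/-- The key reverse-duality (lower bound). -/
lemma holder_one {R : Set X} (h0 : volume R ≠ 0) (h1 : volume R ≠ ∞) {n : ℕ}
    (f : Fin n → X → ℝ) (hf : ∀ i, Measurable (f i)) (a : Fin n → ℝ≥0∞)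
    (ha : ∀ i, a i ≠ ∞) (g : X → ℝ) (hg : Measurable g) (c : ℝ≥0∞) (hc : c ≠ ∞)
    (h : ∀ᵐ x, g x * ∏ i, f i x = 1) :
    1 ≤ eLpNorm g c⁻¹ (nu R) * ∏ i, eLpNorm (f i) (a i)⁻¹ (nu R) := by
  have hne : nu R ≠ 0 := fun h => by simpa [h] using nu_univ h0 h1
  have hs : c + ∑ i, a i ≠ ∞ := by
    simp [ENNReal.add_eq_top, ENNReal.sum_eq_top, ha, hc]
  have e : eLpNorm (fun x => g x * ∏ i, f i x) (c + ∑ i, a i)⁻¹ (nu R) = 1 := by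
    rw [eLpNorm_congr_ae (g := fun _ => (1:ℝ)) (nu_ae h),
      eLpNorm_const _ (ENNReal.inv_ne_zero.2 hs) hne, nu_univ h0 h1]
    simp
  rw [← e]
  refine (holder_two hg (Finset.measurable_fun_prod _ fun j _ => hf j) _ _).trans ?_
  gcongr
  exact holder_prod h0 h1 _ f hf a

lemma wAvg_eq {R : Set X} (h0 : volume R ≠ 0) (h1 : volume R ≠ ∞) {μ f h : X → ℝ}
    (hf : ∀ᵐ x, 0 ≤ f x) (hh : ∀ᵐ x, f x * μ x = h x) :
    wAvg R μ f = avgE R h / avgE R μ := by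
  have : (∫⁻ x in R, ENNReal.ofReal (f x) * ENNReal.ofReal (μ x))
      = ∫⁻ x in R, ENNReal.ofReal (h x) := by
    apply lintegral_congr_ae
    filter_upwards [ae_restrict_of_ae hf, ae_restrict_of_ae hh] with x hx hx'
    rw [← hx', ENNReal.ofReal_mul hx]
  rw [wAvg, this, avgE, avgE]
  rw [ENNReal.div_eq_inv_mul, ENNReal.div_eq_inv_mul, ENNReal.div_eq_inv_mul,
    ENNReal.div_eq_inv_mul, ENNReal.mul_inv (by simp [h1]) (by simp [h0]), inv_inv]
  rw [show volume R * (∫⁻ x in R, ENNReal.ofReal (μ x))⁻¹ * ((volume R)⁻¹ *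
      ∫⁻ x in R, ENNReal.ofReal (h x)) = (volume R * (volume R)⁻¹) *
      ((∫⁻ x in R, ENNReal.ofReal (μ x))⁻¹ * ∫⁻ x in R, ENNReal.ofReal (h x)) by ring,
    ENNReal.mul_inv_cancel h0 h1, one_mul]

lemma AqRatio_eq {R : Set X} (h0 : volume R ≠ 0) (h1 : volume R ≠ ∞) {P u : X → ℝ}
    (hP : ∀ᵐ x, 0 < P x) (hu : ∀ᵐ x, 0 < u x) {S pn q : ℝ≥0∞} (hS : S ≠ ∞) (hpn : 1 ≤ pn)
    (hq : q = (S + pn⁻¹)⁻¹)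
    (hT0 : eLpNorm P (1 + S)⁻¹ (nu R) ≠ 0) (hT1 : eLpNorm P (1 + S)⁻¹ (nu R) ≠ ∞) :
    AqRatio pn q (fun x => P x ^ ((1 + S)⁻¹).toReal)
      (fun x => u x * (P x ^ ((1 + S)⁻¹).toReal) ^ (1 / (dualExp pn).toReal)) R
      = mainFactor R (fun x => P x * u x) q * dualFactor R u pn *
        (eLpNorm P (1 + S)⁻¹ (nu R))⁻¹ := by
  have h1S : 1 + S ≠ ∞ := ENNReal.add_ne_top.2 ⟨by simp, hS⟩
  have h1S0 : 1 + S ≠ 0 := by simp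
  have hB := avgE_rpow (R := R) hP (ENNReal.inv_ne_zero.2 h1S) (ENNReal.inv_ne_top.2 h1S0)
  set T := eLpNorm P (1 + S)⁻¹ (nu R) with hT
  set ρ := ((1 + S)⁻¹).toReal with hρ
  have hρ' : ρ = (1 + S.toReal)⁻¹ := by
    rw [hρ, ENNReal.toReal_inv, ENNReal.toReal_add (by simp) hS]; simp
  have hSnn : 0 ≤ S.toReal := ENNReal.toReal_nonneg
  have hρpos : 0 < ρ := by rw [hρ']; positivity
  set B := avgE R (fun x => P x ^ ρ) with hBdef
  set y := (dualExp pn)⁻¹.toReal with hy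
  have hya : pn⁻¹.toReal + y = 1 := by
    have h := inv_add_dualExp hpn
    have h2 : pn⁻¹ ≠ ∞ := by
      intro h'; simp [h'] at h
    have h3 : (dualExp pn)⁻¹ ≠ ∞ := by
      intro h'; simp [h'] at h
    rw [hy, ← ENNReal.toReal_add h2 h3, h]; simp
  have hpni : pn⁻¹ ≠ ∞ := by
    simp only [ne_eq, ENNReal.inv_eq_top]
    rintro rfl
    simp at hpn
  have hy' : 1 / (dualExp pn).toReal = y := by rw [hy, ENNReal.toReal_inv, one_div]
  have hqi : (q⁻¹).toReal = S.toReal + pn⁻¹.toReal := by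
    rw [hq, inv_inv, ENNReal.toReal_add hS hpni]
  have hB0 : B ≠ 0 := by
    rw [hB]; simp [ENNReal.rpow_eq_zero_iff, hT0, hT1]
  have hB1 : B ≠ ∞ := by
    rw [hB]; simp [ENNReal.rpow_eq_top_iff, hT0, hT1]
  rw [hy']
  have F1 : (if q = ∞ then essSupE R (fun x => u x * (P x ^ ρ) ^ y) else
      (wAvg R (fun x => P x ^ ρ) fun x => (u x * (P x ^ ρ) ^ y) ^ q.toReal) ^ (1 / q.toReal))
      = mainFactor R (fun x => P x * u x) q * B ^ (-(q⁻¹).toReal) := by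
    unfold mainFactor
    split_ifs with hqt
    · have h2 : S.toReal + pn⁻¹.toReal = 0 := by rw [← hqi, hqt]; simp
      have h3 : 0 ≤ pn⁻¹.toReal := ENNReal.toReal_nonneg
      have h4 : S.toReal = 0 := by linarith
      have h5 : y = 1 := by linarith
      have h6 : ρ = 1 := by rw [hρ', h4]; simp
      rw [hqt, h5, h6]
      simp [mul_comm]
    · have hq0 : q ≠ 0 := by
        rw [hq]; simp [hS, hpni]
      have hqpos := ENNReal.toReal_pos hq0 hqt
      have hqi' : q.toReal = (S.toReal + pn⁻¹.toReal)⁻¹ := by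
        rw [← hqi, ENNReal.toReal_inv, inv_inv]
      have hne : S.toReal + pn⁻¹.toReal ≠ 0 := by
        intro h; rw [h] at hqi'; simp at hqi'; rw [hqi'] at hqpos; simp at hqpos
      rw [wAvg_eq (h := fun x => (P x * u x) ^ q.toReal) h0 h1]
      · rw [ENNReal.div_rpow_of_nonneg _ _ (by positivity), ENNReal.rpow_neg,
          ENNReal.toReal_inv, one_div, div_eq_mul_inv]
      · filter_upwards [hP, hu] with x hx hx'
        positivity
      · filter_upwards [hP, hu] with x hx hx'
        rw [Real.mul_rpow hx'.le (by positivity), ← Real.rpow_mul hx.le, ← Real.rpow_mul hx.le,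
          mul_assoc, ← Real.rpow_add hx, Real.mul_rpow hx.le hx'.le, mul_comm]
        congr 2
        rw [hqi', hρ']
        have : y = 1 - pn⁻¹.toReal := by linarith
        rw [this]
        field_simp
        ring
  have F2 : (if pn = 1 then essSupE R (fun x => (u x * (P x ^ ρ) ^ y)⁻¹) else
      (wAvg R (fun x => P x ^ ρ) fun x => (u x * (P x ^ ρ) ^ y) ^ (-(dualExp pn).toReal))
        ^ (1 / (dualExp pn).toReal))
      = dualFactor R u pn * B ^ (-y) := by
    unfold dualFactor
    split_ifs with hqt
    · have h5 : y = 0 := by rw [hqt] at hya; simpa using hya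
      rw [h5]
      simp
    · have hd0 := dualExp_ne_zero hpn
      have hd1 : dualExp pn ≠ ∞ := fun h' => hqt ((dualExp_eq_top hpn).1 h')
      have hdpos := ENNReal.toReal_pos hd0 hd1
      rw [wAvg_eq (h := fun x => (u x) ^ (-(dualExp pn).toReal)) h0 h1]
      · rw [ENNReal.div_rpow_of_nonneg _ _ (by positivity), ENNReal.rpow_neg,
          hy', div_eq_mul_inv]
      · filter_upwards [hP, hu] with x hx hx'
        positivity
      · filter_upwards [hP, hu] with x hx hx'
        rw [Real.mul_rpow hx'.le (by positivity), ← Real.rpow_mul hx.le, ← Real.rpow_mul hx.le,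
          mul_assoc, ← Real.rpow_add hx, ← hy']
        have : ρ * (1 / (dualExp pn).toReal) * -(dualExp pn).toReal + ρ = 0 := by
          field_simp
          ring
        rw [this]; simp
  unfold AqRatio
  rw [F1, F2]
  have key : B ^ (-(q⁻¹).toReal) * B ^ (-y) = T⁻¹ := by
    rw [← ENNReal.rpow_add _ _ hB0 hB1, hB, ← ENNReal.rpow_mul, hqi, ← ENNReal.rpow_neg_one T]
    congr 1
    have : S.toReal + pn⁻¹.toReal + y = 1 + S.toReal := by linarith
    rw [show -(S.toReal + pn⁻¹.toReal) + -y = -(1 + S.toReal) by linarith, hρ']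
    have : 1 + S.toReal ≠ 0 := by positivity
    field_simp
  rw [← key]
  ring

end gen

lemma cube_vol {d : ℕ} {I : Set (Fin d → ℝ)} (h : IsCube I) :
    volume I ≠ 0 ∧ volume I ≠ ∞ := by
  obtain ⟨a, h, hh, rfl⟩ := h
  simp only [cubeOf, Real.volume_pi_Ico]
  constructor
  · rw [Finset.prod_ne_zero_iff]
    intro i _
    simpa using hh
  · exact ENNReal.prod_ne_top fun i _ => by simp

lemma rect_vol {d₁ d₂ : ℕ} {R : Set (Pt d₁ d₂)} (h : IsRect R) :
    volume R ≠ 0 ∧ volume R ≠ ∞ := by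
  obtain ⟨I, J, hI, hJ, rfl⟩ := h
  have := cube_vol hI
  have := cube_vol hJ
  rw [Measure.volume_eq_prod, Measure.prod_prod]
  exact ⟨mul_ne_zero (by tauto) (by tauto), ENNReal.mul_ne_top (by tauto) (by tauto)⟩

lemma ArRect_bound {d₁ d₂ : ℕ} {f : Pt d₁ d₂ → ℝ} (hf : ∀ᵐ x, 0 < f x)
    {θ b r : ℝ≥0∞} (h0 : θ ≠ 0) (h1 : θ ≠ ∞) (hb : b ≠ ∞) (hr : r = 1 + θ * b)
    (h : ArRect r (fun x => f x ^ θ.toReal) < ∞) :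
    ∃ C : ℝ≥0∞, C ≠ ∞ ∧ ∀ R : Set (Pt d₁ d₂), IsRect R →
      eLpNorm f θ (nu R) * eLpNorm (fun x => (f x)⁻¹) b⁻¹ (nu R) ≤ C := by
  have ht := ENNReal.toReal_pos h0 h1
  refine ⟨(ArRect r (fun x => f x ^ θ.toReal)) ^ (1 / θ.toReal),
    ENNReal.rpow_ne_top_of_nonneg (by positivity) h.ne, fun R hR => ?_⟩
  rw [one_div]
  rw [ENNReal.le_rpow_inv_iff ht, ← ArRatio_eq (rect_vol hR).2 hf h0 h1 hb hr]
  exact le_iSup₂ (f := fun (R : Set (Pt d₁ d₂)) (_ : IsRect R) =>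
    ArRatio r R (fun x => f x ^ θ.toReal)) R hR

end S14

end

/-- Reduction of the multilinear class to a weighted linear class.
With `n + 1` weights `w_1, …, w_{n+1}` (so that the `n` of the informal statement is
`n + 1` here), `ρ = (1 + ∑_{i ≤ n} 1/p_i)⁻¹`, assuming
`w_i^{1/(n + 1/p_i)} ∈ A_{(n+1)/(n + 1/p_i)}` for `i ≤ n` and
`ŵ := (∏_{i ≤ n} w_i)^ρ ∈ A_{(n+1)ρ}`, we have
`(w_1,…,w_{n+1}) ∈ A_{p⃗}` iff `W := w_{n+1} ŵ^{1/p_{n+1}'} ∈ A_{p_{n+1}, p}(ŵ)`. -/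
theorem statement14 {d₁ d₂ n : ℕ}
    (p : Fin (n + 1) → ℝ≥0∞) (hp : ∀ i, 1 ≤ p i)
    (w : Fin (n + 1) → Pt d₁ d₂ → ℝ) (hw : ∀ i, Measurable (w i))
    (hwpos : ∀ i, ∀ᵐ x ∂(volume : Measure (Pt d₁ d₂)), 0 < w i x)
    (hlin : ∀ i : Fin n,
      ArRect (((n : ℝ≥0∞) + 1) / ((n : ℝ≥0∞) + (p i.castSucc)⁻¹))
          (fun x => w i.castSucc x ^ (((n : ℝ≥0∞) + (p i.castSucc)⁻¹)⁻¹).toReal) < ∞)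
    (hhat : ArRect (((n : ℝ≥0∞) + 1) * (1 + ∑ i : Fin n, (p i.castSucc)⁻¹)⁻¹)
        (fun x => (∏ i : Fin n, w i.castSucc x) ^
          ((1 + ∑ i : Fin n, (p i.castSucc)⁻¹)⁻¹).toReal) < ∞) :
    AvecRect p w < ∞ ↔
      AqRect (p (Fin.last n)) (∑ i, (p i)⁻¹)⁻¹
        (fun x => (∏ i : Fin n, w i.castSucc x) ^
          ((1 + ∑ i : Fin n, (p i.castSucc)⁻¹)⁻¹).toReal)
        (fun x => w (Fin.last n) x *
          ((∏ i : Fin n, w i.castSucc x) ^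
            ((1 + ∑ i : Fin n, (p i.castSucc)⁻¹)⁻¹).toReal) ^
            (1 / (dualExp (p (Fin.last n))).toReal)) < ∞ := by
  have ha : ∀ i, (p i)⁻¹ ≠ ∞ := fun i => by
    simp only [ne_eq, ENNReal.inv_eq_top]
    intro h
    have := hp i
    simp [h] at this
  have hab : ∀ i, (p i)⁻¹ + (dualExp (p i))⁻¹ = 1 := fun i => S14.inv_add_dualExp (hp i)
  have hb : ∀ i, (dualExp (p i))⁻¹ ≠ ∞ := fun i h => by
    have := hab i
    simp [h] at this
  set S : ℝ≥0∞ := ∑ i : Fin n, (p i.castSucc)⁻¹ with hS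
  set s : ℝ≥0∞ := ∑ i : Fin n, (dualExp (p i.castSucc))⁻¹ with hs
  have hSt : S ≠ ∞ := by simp [hS, ENNReal.sum_eq_top, ha]
  have hst : s ≠ ∞ := by simp [hs, ENNReal.sum_eq_top, hb]
  have hSs : S + s = n := by
    rw [hS, hs, ← Finset.sum_add_distrib]
    simp [hab]
  set P : Pt d₁ d₂ → ℝ := fun x => ∏ i : Fin n, w i.castSucc x with hPdef
  have hPm : Measurable P := Finset.measurable_fun_prod _ fun j _ => hw _
  have hall : ∀ᵐ x ∂(volume : Measure (Pt d₁ d₂)), ∀ i, 0 < w i x := ae_all_iff.2 hwpos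
  have hP : ∀ᵐ x, 0 < P x := by
    filter_upwards [hall] with x hx
    exact Finset.prod_pos fun i _ => hx _
  have h1S : 1 + S ≠ ∞ := ENNReal.add_ne_top.2 ⟨by simp, hSt⟩
  have h1S0 : 1 + S ≠ 0 := by simp
  obtain ⟨C, hC, hCb⟩ := S14.ArRect_bound hP (θ := (1 + S)⁻¹) (b := s)
    (ENNReal.inv_ne_zero.2 h1S) (ENNReal.inv_ne_top.2 h1S0) hst
    (by
      rw [← hSs, show S + s + 1 = (1 + S) + s by ring, add_mul,
        ENNReal.mul_inv_cancel h1S0 h1S, mul_comm s]) hhat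
  have hna : ∀ i : Fin n, (n : ℝ≥0∞) + (p i.castSucc)⁻¹ ≠ ∞ := fun i =>
    ENNReal.add_ne_top.2 ⟨by simp, ha _⟩
  have hna0 : ∀ i : Fin n, (n : ℝ≥0∞) + (p i.castSucc)⁻¹ ≠ 0 := fun i => by
    have : n ≠ 0 := by
      have := i.2
      omega
    simp [this]
  have hlin' := fun i : Fin n => S14.ArRect_bound (hwpos i.castSucc)
    (θ := ((n : ℝ≥0∞) + (p i.castSucc)⁻¹)⁻¹) (b := (dualExp (p i.castSucc))⁻¹)
    (ENNReal.inv_ne_zero.2 (hna i)) (ENNReal.inv_ne_top.2 (hna0 i)) (hb _)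
    (by
      rw [div_eq_mul_inv]
      nth_rewrite 1 [← hab i.castSucc]
      rw [← add_assoc, add_mul, ENNReal.mul_inv_cancel (hna0 i) (hna i), mul_comm (dualExp _)⁻¹])
    (hlin i)
  choose c hc hcb using hlin'
  have H1 : ∀ R : Set (Pt d₁ d₂), IsRect R → 1 ≤ eLpNorm P (1 + S)⁻¹ (S14.nu R) *
      ∏ i : Fin n, dualFactor R (w i.castSucc) (p i.castSucc) := by
    intro R hR
    have hv := S14.rect_vol hR
    have := S14.holder_one hv.1 hv.2 (fun (i : Fin n) x => (w i.castSucc x)⁻¹)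
      (fun i => (hw _).inv) (fun i => (dualExp (p i.castSucc))⁻¹) (fun i => hb _) P hPm
      (1 + S) h1S (by
        filter_upwards [hP] with x hx
        rw [Finset.prod_inv_distrib]
        exact mul_inv_cancel₀ hx.ne')
    simpa [S14.dualFactor_eq hv.2 (hwpos _) (hp _)] using this
  have H2 : ∀ R : Set (Pt d₁ d₂), IsRect R → 1 ≤ eLpNorm (fun x => (P x)⁻¹) s⁻¹ (S14.nu R) *
      ∏ i : Fin n, eLpNorm (w i.castSucc) ((n : ℝ≥0∞) + (p i.castSucc)⁻¹)⁻¹ (S14.nu R) := by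
    intro R hR
    have hv := S14.rect_vol hR
    exact S14.holder_one hv.1 hv.2 (fun (i : Fin n) => w i.castSucc)
      (fun i => hw _) (fun i => (n : ℝ≥0∞) + (p i.castSucc)⁻¹) hna (fun x => (P x)⁻¹) hPm.inv
      s hst (by
        filter_upwards [hP] with x hx
        exact inv_mul_cancel₀ hx.ne')
  have H3 : ∀ R : Set (Pt d₁ d₂), IsRect R → eLpNorm P (1 + S)⁻¹ (S14.nu R) *
      ∏ i : Fin n, dualFactor R (w i.castSucc) (p i.castSucc) ≤ C * ∏ i, c i := by
    intro R hR
    have hv := S14.rect_vol hR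
    calc _ ≤ (eLpNorm P (1 + S)⁻¹ (S14.nu R) *
            ∏ i : Fin n, dualFactor R (w i.castSucc) (p i.castSucc)) *
          (eLpNorm (fun x => (P x)⁻¹) s⁻¹ (S14.nu R) * ∏ i : Fin n,
            eLpNorm (w i.castSucc) ((n : ℝ≥0∞) + (p i.castSucc)⁻¹)⁻¹ (S14.nu R)) :=
          le_mul_of_one_le_right (zero_le) (H2 R hR)
      _ = (eLpNorm P (1 + S)⁻¹ (S14.nu R) * eLpNorm (fun x => (P x)⁻¹) s⁻¹ (S14.nu R)) *
          ∏ i : Fin n, (eLpNorm (w i.castSucc) ((n : ℝ≥0∞) + (p i.castSucc)⁻¹)⁻¹ (S14.nu R) *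
            dualFactor R (w i.castSucc) (p i.castSucc)) := by
          rw [Finset.prod_mul_distrib]
          ring
      _ ≤ _ := by
          refine mul_le_mul' (hCb R hR) (Finset.prod_le_prod' fun i _ => ?_)
          rw [S14.dualFactor_eq hv.2 (hwpos _) (hp _)]
          simpa using hcb i R hR
  have HQ : ∀ R : Set (Pt d₁ d₂), IsRect R →
      AvecRatio p w R = AqRatio (p (Fin.last n)) (∑ i, (p i)⁻¹)⁻¹
        (fun x => P x ^ ((1 + S)⁻¹).toReal)
        (fun x => w (Fin.last n) x * (P x ^ ((1 + S)⁻¹).toReal) ^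
            (1 / (dualExp (p (Fin.last n))).toReal)) R *
        (eLpNorm P (1 + S)⁻¹ (S14.nu R) *
          ∏ i : Fin n, dualFactor R (w i.castSucc) (p i.castSucc)) := by
    intro R hR
    have hv := S14.rect_vol hR
    have hT0 : eLpNorm P (1 + S)⁻¹ (S14.nu R) ≠ 0 := by
      intro h
      have := H1 R hR
      rw [h] at this
      simp at this
    have hF0 : eLpNorm (fun x => (P x)⁻¹) s⁻¹ (S14.nu R) ≠ 0 := by
      intro h
      have := H2 R hR
      rw [h] at this
      simp at this
    have hT1 : eLpNorm P (1 + S)⁻¹ (S14.nu R) ≠ ∞ := by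
      intro h
      have := hCb R hR
      rw [h, ENNReal.top_mul hF0] at this
      exact hC (top_le_iff.1 this)
    rw [S14.AqRatio_eq hv.1 hv.2 hP (hwpos _) hSt (hp _)
      (by rw [Fin.sum_univ_castSucc]) hT0 hT1]
    unfold AvecRatio
    rw [Fin.prod_univ_castSucc (fun i => dualFactor R (w i) (p i))]
    have e : (fun x => ∏ i, w i x) = fun x => P x * w (Fin.last n) x := by
      funext x
      rw [Fin.prod_univ_castSucc]
    rw [e]
    set M := mainFactor R (fun x => P x * w (Fin.last n) x) (∑ i, (p i)⁻¹)⁻¹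
    set T := eLpNorm P (1 + S)⁻¹ (S14.nu R)
    set D := ∏ i : Fin n, dualFactor R (w i.castSucc) (p i.castSucc)
    set L := dualFactor R (w (Fin.last n)) (p (Fin.last n))
    rw [show M * L * T⁻¹ * (T * D) = M * L * (T * T⁻¹) * D by ring,
      ENNReal.mul_inv_cancel hT0 hT1]
    ring
  constructor
  · intro h
    refine lt_of_le_of_lt (iSup₂_le fun R hR => ?_) h
    refine le_trans ?_ (le_iSup₂ (f := fun (R : Set (Pt d₁ d₂)) (_ : IsRect R) =>
      AvecRatio p w R) R hR)
    rw [HQ R hR]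
    exact le_mul_of_one_le_right (zero_le) (H1 R hR)
  · intro h
    have hfin : C * ∏ i, c i < ∞ :=
      ENNReal.mul_lt_top hC.lt_top (ENNReal.prod_lt_top fun i _ => (hc i).lt_top)
    refine lt_of_le_of_lt (iSup₂_le fun R hR => ?_) (ENNReal.mul_lt_top h hfin)
    rw [HQ R hR]
    exact mul_le_mul' (le_iSup₂ (f := fun (R : Set (Pt d₁ d₂)) (_ : IsRect R) =>
      AqRatio (p (Fin.last n)) (∑ i, (p i)⁻¹)⁻¹
        (fun x => P x ^ ((1 + S)⁻¹).toReal)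
        (fun x => w (Fin.last n) x * (P x ^ ((1 + S)⁻¹).toReal) ^
            (1 / (dualExp (p (Fin.last n))).toReal)) R) R hR) (H3 R hR)
end
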